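/- arXiv:1905.12312 — 3 statements merged into one kernel-verified Lean document; each statement's English description precedes it below -/
import Mathlib

section
/- For any partition μ, Σ_{λ⋗μ} F_λ · c(λ/μ) = 0, where the sum is over all partitions λ obtained from μ by adding one box, F_λ is the number of standard Young tableaux of shape λ, and c(λ/μ) is the content of the added box. -/
open Polynomial Finset

/-- `AddBox μ lam` means the Young diagram `lam` is obtained from `μ` by adding one box,
i.e. `μ ⋖ lam` in the Young lattice. -/
def AddBox (μ lam : YoungDiagram) : Prop := μ ≤ lam ∧ lam.card = μ.card + 1

/-- The sum of the contents (column − row) of the boxes of `lam` not in `μ`;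
when `lam/μ` is a single box this is the content of that box. -/
def skewContent (lam μ : YoungDiagram) : ℤ :=
  ∑ c ∈ lam.cells \ μ.cells, ((c.2 : ℤ) - (c.1 : ℤ))

/-- `F μ`: the number of standard Young tableaux of shape `μ`, i.e. bijective fillings of the
cells of `μ` by `0, …, |μ|-1` that increase along rows and columns. -/
noncomputable def SYTCount (μ : YoungDiagram) : ℕ :=
  Nat.card {T : μ.cells ≃ Fin μ.card //
    ∀ a b : μ.cells, (a : ℕ × ℕ).1 ≤ (b : ℕ × ℕ).1 → (a : ℕ × ℕ).2 ≤ (b : ℕ × ℕ).2 →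
      (T a : ℕ) ≤ (T b : ℕ)}

/-- `lam` is obtained from `ρ` by adding a horizontal domino. -/
def AddDominoH (ρ lam : YoungDiagram) : Prop :=
  ρ ≤ lam ∧ ∃ i j : ℕ, lam.cells \ ρ.cells = {(i, j), (i, j + 1)}

/-- `lam` is obtained from `ρ` by adding a vertical domino. -/
def AddDominoV (ρ lam : YoungDiagram) : Prop :=
  ρ ≤ lam ∧ ∃ i j : ℕ, lam.cells \ ρ.cells = {(i, j), (i + 1, j)}

/-- The number of (nonempty) rows of a Young diagram. -/
def nrows (μ : YoungDiagram) : ℕ := μ.colLen 0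

/-- The degree vector of a partition: `n_i = λ_i + r - i` (here `0`-indexed). -/
def degVec (μ : YoungDiagram) (i : Fin (nrows μ)) : ℕ :=
  μ.rowLen i + (nrows μ - 1 - (i : ℕ))

namespace YAux

/-- Linear extensions of a finite set of cells, as functions vanishing off the set. -/
def LF (S : Finset (ℕ × ℕ)) (n : ℕ) : Set (ℕ × ℕ → ℕ) :=
  {f | (∀ x, x ∉ S → f x = 0) ∧ (∀ x ∈ S, f x < n) ∧ (∀ x ∈ S, ∀ y ∈ S, f x = f y → x = y) ∧
    (∀ k, k < n → ∃ x ∈ S, f x = k) ∧ ∀ a ∈ S, ∀ b ∈ S, a ≤ b → f a ≤ f b}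

abbrev LT (S : Finset (ℕ × ℕ)) (n : ℕ) : Type :=
  {T : S ≃ Fin n //
    ∀ a b : S, (a : ℕ × ℕ).1 ≤ (b : ℕ × ℕ).1 → (a : ℕ × ℕ).2 ≤ (b : ℕ × ℕ).2 →
      (T a : ℕ) ≤ (T b : ℕ)}

def toLF (S : Finset (ℕ × ℕ)) (n : ℕ) (T : LT S n) : LF S n :=
  ⟨fun x => if h : x ∈ S then (T.1 ⟨x, h⟩ : ℕ) else 0, by
    refine ⟨fun x hx => by simp [hx], fun x hx => by simp [hx], ?_, ?_, ?_⟩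
    · intro x hx y hy h
      simp only [hx, hy, dif_pos] at h
      have := T.1.injective (Fin.ext h)
      simpa using this
    · intro k hk
      refine ⟨(T.1.symm ⟨k, hk⟩ : S), (T.1.symm ⟨k, hk⟩).2, ?_⟩
      simp
    · intro a ha b hb hab
      simp only [ha, hb, dif_pos]
      exact T.2 ⟨a, ha⟩ ⟨b, hb⟩ hab.1 hab.2⟩

lemma toLF_bij (S : Finset (ℕ × ℕ)) (n : ℕ) : Function.Bijective (toLF S n) := by
  constructor
  · intro T U h
    apply Subtype.ext
    ext x
    have := congrFun (congrArg Subtype.val h) x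
    simpa [toLF] using this
  · rintro ⟨f, h0, h1, h2, h3, h4⟩
    refine ⟨⟨Equiv.ofBijective (fun x : S => (⟨f x, h1 x x.2⟩ : Fin n)) ⟨?_, ?_⟩, ?_⟩, ?_⟩
    · intro x y h
      exact Subtype.ext (h2 x x.2 y y.2 (by simpa using h))
    · intro k
      obtain ⟨x, hx, hk⟩ := h3 k k.2
      exact ⟨⟨x, hx⟩, Fin.ext hk⟩
    · intro a b hab hab'
      exact h4 a a.2 b b.2 ⟨hab, hab'⟩
    · apply Subtype.ext
      funext x
      by_cases hx : x ∈ S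
      · simp only [toLF, hx, dif_pos]
        rfl
      · simp [toLF, hx, h0 x hx]

instance (S : Finset (ℕ × ℕ)) (n : ℕ) : Finite (LF S n) :=
  Finite.of_surjective _ (toLF_bij S n).2

noncomputable def G (S : Finset (ℕ × ℕ)) : ℕ := Nat.card (LF S S.card)

lemma G_eq (μ : YoungDiagram) : SYTCount μ = G μ.cells :=
  Nat.card_eq_of_bijective _ (toLF_bij μ.cells μ.card)

open Classical in
/-- Removable cells. -/
noncomputable def R (S : Finset (ℕ × ℕ)) : Finset (ℕ × ℕ) :=
  S.filter fun c => IsLowerSet ((S.erase c : Finset (ℕ × ℕ)) : Set (ℕ × ℕ))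

open Classical in
/-- Addable cells. -/
noncomputable def A (S : Finset (ℕ × ℕ)) : Finset (ℕ × ℕ) :=
  (insert (0, 0) (S.image (fun c => (c.1 + 1, c.2)) ∪ S.image (fun c => (c.1, c.2 + 1)))).filter
    fun c => c ∉ S ∧ IsLowerSet ((insert c S : Finset (ℕ × ℕ)) : Set (ℕ × ℕ))

lemma mem_R {S : Finset (ℕ × ℕ)} {c : ℕ × ℕ} :
    c ∈ R S ↔ c ∈ S ∧ IsLowerSet ((S.erase c : Finset (ℕ × ℕ)) : Set (ℕ × ℕ)) := by
  simp [R]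

lemma mem_A {S : Finset (ℕ × ℕ)} {c : ℕ × ℕ} :
    c ∈ A S ↔ c ∉ S ∧ IsLowerSet ((insert c S : Finset (ℕ × ℕ)) : Set (ℕ × ℕ)) := by
  classical
  unfold A
  rw [Finset.mem_filter, and_iff_right_iff_imp]
  rintro ⟨h1, h2⟩
  obtain ⟨i, j⟩ := c
  rcases i with _ | i
  · rcases j with _ | j
    · simp
    · have : ((0, j) : ℕ × ℕ) ∈ insert (0, j + 1) S :=
        h2 (show ((0, j) : ℕ × ℕ) ≤ (0, j + 1) from ⟨le_rfl, Nat.le_succ j⟩) (by simp)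
      have : ((0, j) : ℕ × ℕ) ∈ S := by simpa using this
      simp [this]
  · have : ((i, j) : ℕ × ℕ) ∈ insert (i + 1, j) S :=
      h2 (show ((i, j) : ℕ × ℕ) ≤ (i + 1, j) from ⟨Nat.le_succ i, le_rfl⟩) (by simp)
    have : ((i, j) : ℕ × ℕ) ∈ S := by simpa using this
    simp [this]

lemma max_of_R {S : Finset (ℕ × ℕ)} {c : ℕ × ℕ} (h : c ∈ R S) {b : ℕ × ℕ} (hb : b ∈ S)
    (hcb : c ≤ b) : b = c := by
  rw [mem_R] at h
  by_contra hne
  have : c ∈ S.erase c := h.2 hcb (by simp [hne, hb])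
  simp at this

lemma R_of_max {S : Finset (ℕ × ℕ)} (hS : IsLowerSet (S : Set (ℕ × ℕ))) {c : ℕ × ℕ} (hc : c ∈ S)
    (h : ∀ b ∈ S, c ≤ b → b = c) : c ∈ R S := by
  rw [mem_R]
  refine ⟨hc, fun y x hxy hy => ?_⟩
  simp only [Finset.coe_erase, Set.mem_sdiff, Finset.mem_coe, Set.mem_singleton_iff] at hy ⊢
  refine ⟨hS hxy hy.1, ?_⟩
  rintro rfl
  exact hy.2 (h y hy.1 hxy)

lemma update_mem {S : Finset (ℕ × ℕ)} {n : ℕ} {c : ℕ × ℕ} (hc : c ∈ R S) {f : ℕ × ℕ → ℕ}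
    (hf : f ∈ LF (S.erase c) n) : Function.update f c n ∈ LF S (n + 1) := by
  have hm := fun b => @max_of_R S c hc b
  have hcS := (mem_R.1 hc).1
  obtain ⟨h0, h1, h2, h3, h4⟩ := hf
  simp only [Finset.mem_erase] at *
  refine ⟨?_, ?_, ?_, ?_, ?_⟩
  · intro x hx
    grind [Function.update_apply]
  · intro x hx
    grind [Function.update_apply]
  · intro x hx
    grind [Function.update_apply]
  · intro k hk
    by_cases hkn : k = n
    · exact ⟨c, hcS, by simp [hkn]⟩
    · obtain ⟨x, hx, hxk⟩ := h3 k (by omega)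
      exact ⟨x, hx.2, by simp [hx.1, hxk]⟩
  · intro a ha b hb hab
    by_cases hac : a = c
    · subst hac
      have := hm b hb hab
      subst this
      exact le_rfl
    · by_cases hbc : b = c
      · subst hbc
        simp [hac]
        exact (h1 a ⟨hac, ha⟩).le
      · simp [hac, hbc]
        exact h4 a ⟨hac, ha⟩ b ⟨hbc, hb⟩ hab

lemma card_LF {S : Finset (ℕ × ℕ)} (hS : IsLowerSet (S : Set (ℕ × ℕ))) (n : ℕ) :
    Nat.card (LF S (n + 1)) = ∑ c ∈ R S, Nat.card (LF (S.erase c) n) := by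
  let Φ : (Σ c : R S, LF (S.erase c.1) n) → LF S (n + 1) :=
    fun p => ⟨Function.update p.2.1 p.1.1 n, update_mem p.1.2 p.2.2⟩
  have hΦ : Function.Bijective Φ := by
    constructor
    · rintro ⟨⟨c, hc⟩, ⟨f, hf⟩⟩ ⟨⟨d, hd⟩, ⟨g, hg⟩⟩ h
      have h' : Function.update f c n = Function.update g d n := congrArg Subtype.val h
      have hcd : c = d := by
        by_contra hne
        have h1 := congrFun h' c
        simp [hne] at h1
        have := hg.2.1 c (by simp [hne, (mem_R.1 hc).1])
        omega
      subst hcd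
      have : f = g := by
        funext x
        by_cases hx : x = c
        · subst hx
          rw [hf.1 x (by simp), hg.1 x (by simp)]
        · have h1 := congrFun h' x
          simpa [hx] using h1
      subst this
      rfl
    · rintro ⟨f, hf⟩
      obtain ⟨h0, h1, h2, h3, h4⟩ := id hf
      obtain ⟨c, hcS, hcn⟩ := h3 n (Nat.lt_succ_self n)
      have hc : c ∈ R S := by
        refine R_of_max hS hcS fun b hb hcb => ?_
        have e1 := h4 c hcS b hb hcb
        have e2 := h1 b hb
        exact h2 b hb c hcS (by omega)
      refine ⟨⟨⟨c, hc⟩, ⟨Function.update f c 0, ?_⟩⟩, ?_⟩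
      · simp only
        refine ⟨?_, ?_, ?_, ?_, ?_⟩
        · intro x hx
          by_cases hxc : x = c
          · simp [hxc]
          · simp [hxc] at hx ⊢
            exact h0 _ hx
        · intro x hx
          obtain ⟨hxc, hx⟩ := Finset.mem_erase.1 hx
          simp [hxc]
          have := h1 x hx
          have : f x ≠ n := fun h => hxc (h2 x hx c hcS (by omega))
          omega
        · intro x hx y hy
          obtain ⟨hxc, hx⟩ := Finset.mem_erase.1 hx
          obtain ⟨hyc, hy⟩ := Finset.mem_erase.1 hy
          simp only [Function.update_apply, hxc, hyc, if_false]
          exact h2 x hx y hy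
        · intro k hk
          obtain ⟨x, hx, hxk⟩ := h3 k (by omega)
          have hxc : x ≠ c := by rintro rfl; omega
          exact ⟨x, by simp [hxc, hx], by simp [hxc, hxk]⟩
        · intro x hx y hy
          obtain ⟨hxc, hx⟩ := Finset.mem_erase.1 hx
          obtain ⟨hyc, hy⟩ := Finset.mem_erase.1 hy
          simp only [Function.update_apply, hxc, hyc, if_false]
          exact h4 x hx y hy
      · apply Subtype.ext
        simp only [Φ, Function.update_idem, ← hcn, Function.update_eq_self]
  rw [← Nat.card_eq_of_bijective Φ hΦ, Nat.card_sigma]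
  exact Finset.sum_coe_sort (R S) (fun c => Nat.card (LF (S.erase c) n))

lemma G_rec {S : Finset (ℕ × ℕ)} (hS : IsLowerSet (S : Set (ℕ × ℕ))) (hne : S.Nonempty) :
    G S = ∑ c ∈ R S, G (S.erase c) := by
  obtain ⟨n, hn⟩ : ∃ n, S.card = n + 1 := ⟨S.card - 1, by have := hne.card_pos; omega⟩
  unfold G
  rw [hn, card_LF hS n]
  refine Finset.sum_congr rfl fun c hc => ?_
  rw [Finset.card_erase_of_mem (mem_R.1 hc).1, hn, Nat.add_sub_cancel]

def ct (c : ℕ × ℕ) : ℤ := (c.2 : ℤ) - (c.1 : ℤ)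

lemma mem_A_iff (μ : YoungDiagram) (i j : ℕ) : (i, j) ∈ A μ.cells ↔
    j = μ.rowLen i ∧ (i = 0 ∨ μ.rowLen i < μ.rowLen (i - 1)) := by
  rw [mem_A]
  constructor
  · rintro ⟨h1, h2⟩
    have h1' : ¬ j < μ.rowLen i := by
      rwa [YoungDiagram.mem_cells, YoungDiagram.mem_iff_lt_rowLen] at h1
    have hj : j = μ.rowLen i := by
      by_contra hne
      have h3 : ((i, μ.rowLen i) : ℕ × ℕ) ∈ insert (i, j) μ.cells :=
        h2 (show ((i, μ.rowLen i) : ℕ × ℕ) ≤ (i, j) from ⟨le_rfl, by simp; omega⟩) (by simp)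
      rw [Finset.mem_insert, YoungDiagram.mem_cells, YoungDiagram.mem_iff_lt_rowLen] at h3
      simp at h3
      omega
    refine ⟨hj, ?_⟩
    rcases i with _ | i
    · simp
    · right
      have h3 : ((i, j) : ℕ × ℕ) ∈ insert (i + 1, j) μ.cells :=
        h2 (show ((i, j) : ℕ × ℕ) ≤ (i + 1, j) from ⟨Nat.le_succ i, le_rfl⟩) (by simp)
      rw [Finset.mem_insert, YoungDiagram.mem_cells, YoungDiagram.mem_iff_lt_rowLen] at h3
      simp at h3
      simp
      omega
  · rintro ⟨rfl, h⟩
    refine ⟨by simp [YoungDiagram.mem_iff_lt_rowLen], ?_⟩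
    rintro ⟨a, b⟩ ⟨a', b'⟩ hle hmem
    obtain ⟨hle1, hle2⟩ := hle
    simp only [Finset.mem_coe, Finset.mem_insert, Prod.mk.injEq, YoungDiagram.mem_cells,
      YoungDiagram.mem_iff_lt_rowLen] at hle1 hle2 hmem ⊢
    have e1 := μ.rowLen_anti a' a hle1
    rcases hmem with ⟨rfl, rfl⟩ | hmem
    · by_cases haa : a' = a
      · subst haa
        omega
      · have e2 := μ.rowLen_anti a' (a - 1) (by omega)
        right
        rcases h with h | h <;> omega
    · right; omega

lemma mem_R_iff (μ : YoungDiagram) (i j : ℕ) : (i, j) ∈ R μ.cells ↔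
    j + 1 = μ.rowLen i ∧ μ.rowLen (i + 1) < μ.rowLen i := by
  constructor
  · intro h
    have h1 := (mem_R.1 h).1
    have ha := @max_of_R _ _ h (i, j + 1)
    have hb := @max_of_R _ _ h (i + 1, j)
    simp [YoungDiagram.mem_iff_lt_rowLen] at h1 ha hb
    omega
  · rintro ⟨h1, h2⟩
    refine R_of_max μ.isLowerSet ?_ ?_
    · rw [YoungDiagram.mem_cells, YoungDiagram.mem_iff_lt_rowLen]; omega
    · rintro ⟨a, b⟩ hab ⟨l1, l2⟩
      simp only at l1 l2
      rw [YoungDiagram.mem_cells, YoungDiagram.mem_iff_lt_rowLen] at hab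
      by_cases hia : i = a
      · subst hia
        ext <;> simp
        omega
      · have := μ.rowLen_anti (i + 1) a (by omega)
        omega

lemma sum_ct (μ : YoungDiagram) : ∑ b ∈ A μ.cells, ct b = ∑ a ∈ R μ.cells, ct a := by
  obtain ⟨N, hN⟩ : ∃ N, ∀ i, N ≤ i → μ.rowLen i = 0 := by
    refine ⟨μ.colLen 0, fun i hi => ?_⟩
    by_contra hne
    have : (i, 0) ∈ μ := YoungDiagram.mem_iff_lt_rowLen.2 (Nat.pos_of_ne_zero hne)
    rw [YoungDiagram.mem_iff_lt_colLen] at this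
    omega
  have hA : ∑ b ∈ A μ.cells, ct b = ∑ i ∈ (Finset.range (N + 1)).filter
      (fun i => i = 0 ∨ μ.rowLen i < μ.rowLen (i - 1)), ((μ.rowLen i : ℤ) - i) := by
    refine Finset.sum_bij' (fun b _ => b.1) (fun i _ => (i, μ.rowLen i)) ?_ ?_ ?_ ?_ ?_
    · rintro ⟨i, j⟩ h
      rw [mem_A_iff] at h
      simp only [Finset.mem_filter, Finset.mem_range]
      refine ⟨?_, h.2⟩
      by_contra hlt
      have := hN (i - 1) (by omega)
      omega
    · intro i h
      rw [mem_A_iff]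
      exact ⟨rfl, (Finset.mem_filter.1 h).2⟩
    · rintro ⟨i, j⟩ h
      rw [mem_A_iff] at h
      simp [h.1]
    · intro i h
      rfl
    · rintro ⟨i, j⟩ h
      rw [mem_A_iff] at h
      simp [h.1, ct]
  have hR : ∑ b ∈ R μ.cells, ct b = ∑ i ∈ (Finset.range N).filter
      (fun i => μ.rowLen (i + 1) < μ.rowLen i), ((μ.rowLen i : ℤ) - 1 - i) := by
    refine Finset.sum_bij' (fun b _ => b.1) (fun i _ => (i, μ.rowLen i - 1)) ?_ ?_ ?_ ?_ ?_
    · rintro ⟨i, j⟩ h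
      rw [mem_R_iff] at h
      simp only [Finset.mem_filter, Finset.mem_range]
      refine ⟨?_, h.2⟩
      by_contra hlt
      have := hN i (by omega)
      omega
    · intro i h
      rw [mem_R_iff]
      have := (Finset.mem_filter.1 h).2
      exact ⟨by omega, this⟩
    · rintro ⟨i, j⟩ h
      rw [mem_R_iff] at h
      simp [← h.1]
    · intro i h
      rfl
    · rintro ⟨i, j⟩ h
      rw [mem_R_iff] at h
      simp [← h.1, ct]
  rw [hA, hR, Finset.sum_filter, Finset.sum_filter, Finset.sum_range_succ', ← sub_eq_zero,
    add_sub_right_comm, ← Finset.sum_sub_distrib]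
  have : ∀ i ∈ Finset.range N,
      ((if i + 1 = 0 ∨ μ.rowLen (i + 1) < μ.rowLen (i + 1 - 1)
        then (μ.rowLen (i + 1) : ℤ) - ((i + 1 : ℕ) : ℤ) else 0) -
      (if μ.rowLen (i + 1) < μ.rowLen i then (μ.rowLen i : ℤ) - 1 - i else 0)) =
      (μ.rowLen (i + 1) : ℤ) - μ.rowLen i := by
    intro i _
    have := μ.rowLen_anti i (i + 1) (Nat.le_succ i)
    simp only [Nat.add_sub_cancel, Nat.succ_ne_zero, false_or]
    split_ifs
    · push_cast; ring
    · omega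
  rw [Finset.sum_congr rfl this, Finset.sum_range_sub (fun i => (μ.rowLen i : ℤ)), hN N le_rfl]
  simp

lemma main (n : ℕ) : ∀ S : Finset (ℕ × ℕ), S.card = n → IsLowerSet (S : Set (ℕ × ℕ)) →
    ∑ b ∈ A S, (G (insert b S) : ℤ) * ct b = 0 := by
  induction n using Nat.strong_induction_on with
  | _ n ih =>
  intro S hn hS
  have e1 : ∀ b ∈ A S, (G (insert b S) : ℤ) * ct b =
      (G S : ℤ) * ct b + ∑ a ∈ (R (insert b S)).erase b, (G (insert b (S.erase a)) : ℤ) * ct b := by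
    intro b hb
    obtain ⟨hbS, hl⟩ := mem_A.1 hb
    have hbR : b ∈ R (insert b S) := by
      rw [mem_R, Finset.erase_insert hbS]
      exact ⟨by simp, hS⟩
    rw [G_rec hl (by simp), ← Finset.add_sum_erase _ _ hbR, Finset.erase_insert hbS]
    push_cast
    rw [add_mul, Finset.sum_mul]
    congr 1
    refine Finset.sum_congr rfl fun a ha => ?_
    rw [Finset.erase_insert_of_ne (Finset.ne_of_mem_erase ha).symm]
  rw [Finset.sum_congr rfl e1, Finset.sum_add_distrib, ← Finset.mul_sum, sum_ct ⟨S, hS⟩]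
  have e2 : ∑ b ∈ A S, ∑ a ∈ (R (insert b S)).erase b, (G (insert b (S.erase a)) : ℤ) * ct b =
      ∑ a ∈ R S, ∑ b ∈ (A (S.erase a)).erase a, (G (insert b (S.erase a)) : ℤ) * ct b := by
    refine Finset.sum_comm' fun b a => ?_
    simp only [Finset.mem_erase, mem_A, mem_R, Finset.mem_insert]
    constructor
    · rintro ⟨⟨hb, hl⟩, hab, haS, hl2⟩
      have haS : a ∈ S := haS.resolve_left hab
      rw [Finset.erase_insert_of_ne (Ne.symm hab)] at hl2
      refine ⟨⟨Ne.symm hab, fun h => hb h.2, hl2⟩, haS, ?_⟩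
      have := hl2.inter hS
      convert this using 1
      ext x
      simp
      grind
    · rintro ⟨⟨hba, hb, hl⟩, haS, hl2⟩
      have hbS : b ∉ S := fun h => hb ⟨hba, h⟩
      refine ⟨⟨hbS, ?_⟩, Ne.symm hba, Or.inr haS, ?_⟩
      · have := hl.union hS
        convert this using 1
        ext x
        simp
        grind
      · rwa [Finset.erase_insert_of_ne hba]
  have e3 : ∀ a ∈ R S, ∑ b ∈ (A (S.erase a)).erase a, (G (insert b (S.erase a)) : ℤ) * ct b =
      - ((G S : ℤ) * ct a) := by
    intro a ha
    obtain ⟨haS, hl⟩ := mem_R.1 ha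
    have haA : a ∈ A (S.erase a) := by
      rw [mem_A, Finset.insert_erase haS]
      exact ⟨by simp, hS⟩
    have := ih (S.erase a).card (by rw [← hn]; exact Finset.card_erase_lt_of_mem haS) _ rfl hl
    rw [← Finset.add_sum_erase _ _ haA, Finset.insert_erase haS] at this
    linarith
  rw [e2, Finset.sum_congr rfl e3, Finset.sum_neg_distrib, ← Finset.mul_sum]
  simp

end YAux

open YAux

theorem stmt5 (μ : YoungDiagram) :
    ∑ᶠ lam ∈ {lam : YoungDiagram | AddBox μ lam}, (SYTCount lam : ℤ) * skewContent lam μ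
      = 0 := by
  classical
  rw [← main _ μ.cells rfl μ.isLowerSet, ← finsum_mem_coe_finset]
  symm
  let e : ℕ × ℕ → YoungDiagram := fun c =>
    if h : IsLowerSet ((insert c μ.cells : Finset (ℕ × ℕ)) : Set (ℕ × ℕ)) then ⟨_, h⟩ else μ
  have he : ∀ c ∈ A μ.cells, (e c).cells = insert c μ.cells := by
    intro c hc
    simp only [e, dif_pos (mem_A.1 hc).2]
  refine finsum_mem_eq_of_bijOn e ⟨?_, ?_, ?_⟩ ?_
  · intro c hc
    have h := he c hc
    refine ⟨?_, ?_⟩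
    · rw [← YoungDiagram.cells_subset_iff, h]
      exact Finset.subset_insert _ _
    · unfold YoungDiagram.card
      rw [h, Finset.card_insert_of_notMem (mem_A.1 hc).1]
  · intro c hc d hd hcd
    have h := he c hc
    rw [hcd, he d hd] at h
    have h2 : c ∈ insert d μ.cells := by rw [h]; simp
    exact (Finset.mem_insert.1 h2).resolve_right (mem_A.1 hc).1
  · rintro lam ⟨hle, hcard⟩
    have hsub := YoungDiagram.cells_subset_iff.2 hle
    have h1 : (lam.cells \ μ.cells).card = 1 := by
      rw [Finset.card_sdiff_of_subset hsub]
      unfold YoungDiagram.card at hcard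
      omega
    obtain ⟨c, hc⟩ := Finset.card_eq_one.1 h1
    have hins : insert c μ.cells = lam.cells := by
      rw [Finset.insert_eq, ← hc, Finset.sdiff_union_of_subset hsub]
    have hcm : c ∈ lam.cells \ μ.cells := by rw [hc]; simp
    have hcA : c ∈ A μ.cells := by
      rw [mem_A, hins]
      exact ⟨(Finset.mem_sdiff.1 hcm).2, lam.isLowerSet⟩
    refine ⟨c, hcA, ?_⟩
    apply YoungDiagram.ext
    rw [he c hcA, hins]
  · intro c hc
    have h := he c hc
    rw [G_eq, h]
    unfold skewContent
    rw [h, Finset.insert_sdiff_of_notMem _ (mem_A.1 hc).1]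
    simp [ct]
end

section
/- For any partition ρ, Σ_{λ ∈ R₂⁺(ρ)} (−1)^{ht(λ/ρ)} F_λ = 0, where the sum is over all partitions λ obtained from ρ by adding a border strip of size 2 (a domino), ht(λ/ρ) is 0 if the domino is horizontal and 1 if vertical, and F_λ is the number of standard Young tableaux of shape λ. -/
open Polynomial Finset

namespace DominoProof

open Classical

lemma cell_lt_card (μ : YoungDiagram) (i j : ℕ) (h : (i, j) ∈ μ) : i < μ.card ∧ j < μ.card := by
  constructor
  · have : (range (i + 1)).card ≤ μ.cells.card := by
      apply Finset.card_le_card_of_injOn (fun k => (k, j))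
      · intro k hk
        simp only [coe_range, Set.mem_Iio] at hk
        exact μ.up_left_mem (by omega) le_rfl h
      · intro a _ b _ hab
        simpa using hab
    simpa using this
  · have : (range (j + 1)).card ≤ μ.cells.card := by
      apply Finset.card_le_card_of_injOn (fun k => (i, k))
      · intro k hk
        simp only [coe_range, Set.mem_Iio] at hk
        exact μ.up_left_mem le_rfl (by omega) h
      · intro a _ b _ hab
        simpa using hab
    simpa using this

lemma finite_card (n : ℕ) : {μ : YoungDiagram | μ.card = n}.Finite := by
  apply Set.Finite.of_finite_image (f := YoungDiagram.cells)
  · apply Set.Finite.subset ((range n ×ˢ range n).powerset.finite_toSet)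
    rintro _ ⟨μ, hμ, rfl⟩
    simp only [coe_powerset, Set.mem_preimage, Set.mem_powerset_iff, coe_subset]
    rintro ⟨i, j⟩ hc
    have := cell_lt_card μ i j hc
    simp only [Set.mem_ofPred_eq] at hμ
    simp only [mem_product, mem_range]
    omega
  · intro a _ b _ h
    exact YoungDiagram.ext h

noncomputable def Y (n : ℕ) : Finset YoungDiagram := (finite_card n).toFinset

lemma mem_Y {n : ℕ} {μ : YoungDiagram} : μ ∈ Y n ↔ μ.card = n := by simp [Y]

noncomputable def Up (μ : YoungDiagram) : Finset YoungDiagram :=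
  (Y (μ.card + 1)).filter (fun l => AddBox μ l)

noncomputable def Dn (μ : YoungDiagram) : Finset YoungDiagram :=
  (Y (μ.card - 1)).filter (fun k => AddBox k μ)

lemma mem_Up {μ l : YoungDiagram} : l ∈ Up μ ↔ AddBox μ l := by
  simp only [Up, mem_filter, mem_Y]
  exact ⟨fun h => h.2, fun h => ⟨h.2, h⟩⟩

lemma mem_Dn {μ k : YoungDiagram} : k ∈ Dn μ ↔ AddBox k μ := by
  simp only [Dn, mem_filter, mem_Y]
  constructor
  · exact fun h => h.2
  · intro h
    have := h.2
    exact ⟨by omega, h⟩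

lemma card_sup_inf (μ ν : YoungDiagram) : (μ ⊔ ν).card + (μ ⊓ ν).card = μ.card + ν.card := by
  simp only [YoungDiagram.card, YoungDiagram.cells_sup, YoungDiagram.cells_inf]
  exact Finset.card_union_add_card_inter _ _

lemma card_mono {μ ν : YoungDiagram} (h : μ ≤ ν) : μ.card ≤ ν.card :=
  Finset.card_le_card (YoungDiagram.cells_subset_iff.2 h)

lemma eq_of_le_card {μ ν : YoungDiagram} (h : μ ≤ ν) (hc : ν.card ≤ μ.card) : μ = ν :=
  YoungDiagram.ext (Finset.eq_of_subset_of_card_le (YoungDiagram.cells_subset_iff.2 h) hc)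

lemma swap_down {μ ν l : YoungDiagram} (h1 : AddBox μ l) (h2 : AddBox ν l) (hne : ν ≠ μ) :
    μ ⊔ ν = l ∧ AddBox (μ ⊓ ν) μ ∧ AddBox (μ ⊓ ν) ν := by
  have hs : μ ⊔ ν ≤ l := sup_le h1.1 h2.1
  have hlt : ¬ (μ ⊔ ν).card ≤ μ.card := by
    intro h
    have e := eq_of_le_card (le_sup_left : μ ≤ μ ⊔ ν) h
    have : ν ≤ μ := by rw [e]; exact le_sup_right
    exact hne (eq_of_le_card this (by have := h1.2; have := h2.2; omega))
  have e1 := h1.2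
  have e2 := h2.2
  have c := card_sup_inf μ ν
  have cl := card_mono hs
  refine ⟨eq_of_le_card hs (by omega), ⟨inf_le_left, by omega⟩, ⟨inf_le_right, by omega⟩⟩

lemma swap_up {μ ν k : YoungDiagram} (h1 : AddBox k μ) (h2 : AddBox k ν) (hne : ν ≠ μ) :
    μ ⊓ ν = k ∧ AddBox μ (μ ⊔ ν) ∧ AddBox ν (μ ⊔ ν) := by
  have hs : k ≤ μ ⊓ ν := le_inf h1.1 h2.1
  have hlt : ¬ μ.card ≤ (μ ⊓ ν).card := by
    intro h
    have e := eq_of_le_card (inf_le_left : μ ⊓ ν ≤ μ) h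
    have : μ ≤ ν := by rw [← e]; exact inf_le_right
    exact hne (eq_of_le_card this (by have := h1.2; have := h2.2; omega)).symm
  have e1 := h1.2
  have e2 := h2.2
  have c := card_sup_inf μ ν
  have cl := card_mono hs
  refine ⟨(eq_of_le_card hs (by omega)).symm, ⟨le_sup_left, by omega⟩, ⟨le_sup_right, by omega⟩⟩

/-! ### The recursion for the number of standard tableaux -/

def IsS (μ : YoungDiagram) (T : ℕ × ℕ → ℕ) : Prop :=
  (∀ c, c ∉ μ → T c = 0) ∧ (∀ c ∈ μ, T c < μ.card) ∧
  (∀ a ∈ μ, ∀ b ∈ μ, T a = T b → a = b) ∧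
  (∀ a ∈ μ, ∀ b ∈ μ, a ≤ b → T a ≤ T b)

noncomputable def toS (μ : YoungDiagram) :
    {T : μ.cells ≃ Fin μ.card //
    ∀ a b : μ.cells, (a : ℕ × ℕ).1 ≤ (b : ℕ × ℕ).1 → (a : ℕ × ℕ).2 ≤ (b : ℕ × ℕ).2 →
      (T a : ℕ) ≤ (T b : ℕ)} ≃ {T // IsS μ T} := by
  apply Equiv.ofBijective (fun T => ⟨fun c => if h : c ∈ μ.cells then (T.1 ⟨c, h⟩ : ℕ) else 0, by
    refine ⟨?_, ?_, ?_, ?_⟩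
    · intro c hc
      rw [← YoungDiagram.mem_cells] at hc
      simp [hc]
    · intro c hc
      rw [← YoungDiagram.mem_cells] at hc
      simp only [hc, dite_true]
      exact (T.1 ⟨c, hc⟩).2
    · intro a ha b hb hab
      rw [← YoungDiagram.mem_cells] at ha hb
      simp only [ha, hb, dite_true] at hab
      have := T.1.injective (Fin.ext hab)
      simpa using this
    · intro a ha b hb hab
      rw [← YoungDiagram.mem_cells] at ha hb
      simp only [ha, hb, dite_true]
      exact T.2 ⟨a, ha⟩ ⟨b, hb⟩ hab.1 hab.2⟩)
  constructor
  · intro T T' h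
    apply Subtype.ext
    ext c
    have := congrFun (congrArg Subtype.val h) c.1
    simpa using this
  · rintro ⟨T, h0, h1, h2, h3⟩
    have hbij : Function.Bijective
        (fun c : μ.cells => (⟨T c.1, h1 c.1 ((YoungDiagram.mem_cells _).1 c.2)⟩ : Fin μ.card)) := by
      rw [Fintype.bijective_iff_injective_and_card]
      constructor
      · intro a b hab
        apply Subtype.ext
        exact h2 a ((YoungDiagram.mem_cells _).1 a.2) b ((YoungDiagram.mem_cells _).1 b.2)
          (by simpa using hab)
      · simp [YoungDiagram.card]
    refine ⟨⟨Equiv.ofBijective _ hbij, ?_⟩, ?_⟩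
    · intro a b h h'
      exact h3 a ((YoungDiagram.mem_cells _).1 a.2) b ((YoungDiagram.mem_cells _).1 b.2) ⟨h, h'⟩
    · apply Subtype.ext
      funext c
      by_cases hc : c ∈ μ.cells
      · simp [hc]
      · have : T c = 0 := h0 c hc
        simp [hc, this]

lemma finite_S (μ : YoungDiagram) : {T | IsS μ T}.Finite := by
  have : Finite {T // IsS μ T} := Finite.of_equiv _ (toS μ)
  exact Set.finite_coe_iff.1 this

noncomputable def S (μ : YoungDiagram) : Finset (ℕ × ℕ → ℕ) := (finite_S μ).toFinset

lemma mem_S {μ : YoungDiagram} {T : ℕ × ℕ → ℕ} : T ∈ S μ ↔ IsS μ T := by simp [S]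

lemma count_eq (μ : YoungDiagram) : SYTCount μ = (S μ).card := by
  unfold SYTCount
  rw [Nat.card_congr (toS μ)]
  rw [← Nat.card_eq_finsetCard]
  exact Nat.card_congr (Equiv.subtypeEquivRight (fun T => mem_S.symm))

noncomputable def extT (μ k : YoungDiagram) (T : ℕ × ℕ → ℕ) : ℕ × ℕ → ℕ :=
  fun x => if x ∈ μ ∧ x ∉ k then k.card else T x

lemma rec_set (μ : YoungDiagram) (hμ : 0 < μ.card) :
    S μ = (Dn μ).biUnion (fun k => (S k).image (extT μ k)) := by
  ext T
  simp only [mem_S, mem_biUnion, mem_image, mem_Dn]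
  constructor
  · rintro ⟨h0, h1, h2, h3⟩
    obtain ⟨n, hn⟩ : ∃ n, μ.card = n + 1 := ⟨μ.card - 1, by omega⟩
    let k : YoungDiagram := ⟨μ.cells.filter (fun x => T x < n), by
      intro a b hba ha
      simp only [coe_filter, Set.mem_ofPred_eq, YoungDiagram.mem_cells] at ha ⊢
      have hb : b ∈ μ := μ.up_left_mem hba.1 hba.2 ha.1
      exact ⟨hb, lt_of_le_of_lt (h3 b hb a ha.1 hba) ha.2⟩⟩
    have hk : ∀ x, x ∈ k ↔ x ∈ μ ∧ T x < n := by
      intro x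
      rw [← YoungDiagram.mem_cells]
      simp [k]
    have himg : μ.cells.image T = range (n + 1) := by
      apply Finset.eq_of_subset_of_card_le
      · intro y hy
        simp only [mem_image, YoungDiagram.mem_cells] at hy
        obtain ⟨x, hx, rfl⟩ := hy
        have := h1 x hx
        simp only [mem_range]; omega
      · rw [card_image_of_injOn]
        · simp only [card_range]
          exact hn.ge
        · intro a ha b hb hab
          exact h2 a ha b hb hab
    have hkim : k.cells.image T = range n := by
      ext y
      simp only [mem_image, YoungDiagram.mem_cells, hk, mem_range]
      constructor
      · rintro ⟨x, hx, rfl⟩; exact hx.2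
      · intro hy
        have : y ∈ μ.cells.image T := by rw [himg]; simp only [mem_range]; omega
        simp only [mem_image, YoungDiagram.mem_cells] at this
        obtain ⟨x, hx, rfl⟩ := this
        exact ⟨x, ⟨hx, hy⟩, rfl⟩
    have hkc : k.card = n := by
      have := congrArg Finset.card hkim
      rw [card_image_of_injOn, card_range] at this
      · exact this
      · intro a ha b hb hab
        exact h2 a ((hk a).1 ha).1 b ((hk b).1 hb).1 hab
    refine ⟨k, ⟨?_, by omega⟩, fun x => if x ∈ k then T x else 0, ⟨?_, ?_, ?_, ?_⟩, ?_⟩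
    · intro x hx; exact ((hk x).1 hx).1
    · intro c hc; simp [hc]
    · intro c hc
      simp only [hc, if_true]
      rw [hkc]; exact ((hk c).1 hc).2
    · intro a ha b hb hab
      simp only [ha, hb, if_true] at hab
      exact h2 a ((hk a).1 ha).1 b ((hk b).1 hb).1 hab
    · intro a ha b hb hab
      simp only [ha, hb, if_true]
      exact h3 a ((hk a).1 ha).1 b ((hk b).1 hb).1 hab
    · funext x
      simp only [extT, hkc]
      by_cases hx : x ∈ μ
      · by_cases hxk : x ∈ k
        · simp [hxk]
        · have a1 := h1 x hx
          have a2 : ¬ T x < n := fun h => hxk ((hk x).2 ⟨hx, h⟩)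
          simp only [hx, hxk, not_false_eq_true, and_self, if_true]
          omega
      · have : x ∉ k := fun h => hx ((hk x).1 h).1
        simp [hx, this, h0 x hx]
  · rintro ⟨k, ⟨hle, hc⟩, T, ⟨h0, h1, h2, h3⟩, rfl⟩
    have hone : (μ.cells \ k.cells).card = 1 := by
      have := Finset.card_sdiff_add_card_eq_card (YoungDiagram.cells_subset_iff.2 hle)
      simp only [YoungDiagram.card] at hc
      omega
    obtain ⟨z, hz⟩ := Finset.card_eq_one.1 hone
    have hz' : ∀ x, (x ∈ μ ∧ x ∉ k) ↔ x = z := by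
      intro x
      have : x ∈ μ.cells \ k.cells ↔ x ∈ ({z} : Finset (ℕ × ℕ)) := by rw [hz]
      simpa using this
    have hin : ∀ x, x ∈ μ → x ∈ k ∨ x = z := by
      intro x hx
      by_cases h : x ∈ k
      · exact Or.inl h
      · exact Or.inr ((hz' x).1 ⟨hx, h⟩)
    have hzk : z ∉ k := ((hz' z).2 rfl).2
    have e1 : ∀ x, x ∈ k → extT μ k T x = T x := by
      intro x hx; simp [extT, hx]
    have e2 : extT μ k T z = k.card := by
      simp only [extT, (hz' z).2 rfl, not_false_eq_true, and_self, if_true]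
    refine ⟨?_, ?_, ?_, ?_⟩
    · intro x hx
      have : x ∉ k := fun h => hx (hle h)
      simp [extT, hx, h0 x this]
    · intro x hx
      rcases hin x hx with h | rfl
      · rw [e1 x h]; have := h1 x h; omega
      · rw [e2]; omega
    · intro a ha b hb hab
      rcases hin a ha with h | rfl <;> rcases hin b hb with h' | rfl
      · rw [e1 a h, e1 b h'] at hab; exact h2 a h b h' hab
      · rw [e1 a h, e2] at hab; have := h1 a h; omega
      · rw [e1 b h', e2] at hab; have := h1 b h'; omega
      · rfl
    · intro a ha b hb hab
      rcases hin a ha with h | rfl <;> rcases hin b hb with h' | rfl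
      · rw [e1 a h, e1 b h']; exact h3 a h b h' hab
      · rw [e1 a h, e2]; exact (h1 a h).le
      · exact absurd (k.up_left_mem hab.1 hab.2 h') hzk
      · exact le_rfl

lemma recover {μ k : YoungDiagram} (h : AddBox k μ) {T : ℕ × ℕ → ℕ} (hT : IsS k T) (x : ℕ × ℕ) :
    x ∈ k ↔ x ∈ μ ∧ extT μ k T x < μ.card - 1 := by
  have hc : μ.card - 1 = k.card := by have := h.2; omega
  rw [hc]
  constructor
  · intro hx
    exact ⟨h.1 hx, by simp only [extT, hx, not_true_eq_false, and_false, if_false]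
                      exact hT.2.1 x hx⟩
  · rintro ⟨hx, hlt⟩
    by_contra hk
    simp [extT, hx, hk] at hlt

lemma count_rec (μ : YoungDiagram) (hμ : 0 < μ.card) :
    SYTCount μ = ∑ k ∈ Dn μ, SYTCount k := by
  rw [count_eq, rec_set μ hμ, card_biUnion]
  · apply sum_congr rfl
    intro k hk
    rw [mem_Dn] at hk
    rw [count_eq, card_image_of_injOn]
    intro T hT T' hT' hTT
    rw [mem_coe, mem_S] at hT hT'
    funext x
    by_cases hx : x ∈ k
    · have := congrFun hTT x
      simpa [extT, hx] using this
    · rw [hT.1 x hx, hT'.1 x hx]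
  · intro k hk k' hk' hne
    rw [Function.onFun]
    rw [Finset.disjoint_left]
    intro T h1 h2
    simp only [mem_image, mem_S] at h1 h2
    obtain ⟨T1, hT1, rfl⟩ := h1
    obtain ⟨T2, hT2, h⟩ := h2
    apply hne
    have a := recover (mem_Dn.1 hk) hT1
    have b := recover (mem_Dn.1 hk') hT2
    rw [h] at b
    apply SetLike.ext
    intro x
    rw [a, b]

/-! ### The commutation step -/

lemma step (w : YoungDiagram → YoungDiagram → ℤ) (hw : ∀ μ ν, w μ (μ ⊔ ν) = w (μ ⊓ ν) ν) (δ : ℤ)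
    (hδ : ∀ μ, ∑ l ∈ Up μ, w μ l = δ + ∑ k ∈ Dn μ, w k μ) (μ : YoungDiagram) :
    ∑ l ∈ Up μ, w μ l * SYTCount l
      = δ * SYTCount μ + ∑ k ∈ Dn μ, ∑ ν ∈ Up k, w k ν * SYTCount ν := by
  have h1 : ∀ l ∈ Up μ, w μ l * (SYTCount l : ℤ)
      = w μ l * SYTCount μ + ∑ ν ∈ (Dn l).erase μ, w μ l * SYTCount ν := by
    intro l hl
    rw [mem_Up] at hl
    rw [count_rec l (by have := hl.2; omega), Nat.cast_sum, mul_sum]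
    rw [add_sum_erase (Dn l) (fun ν => w μ l * (SYTCount ν : ℤ)) (mem_Dn.2 hl)]
  have h2 : ∀ k ∈ Dn μ, ∑ ν ∈ Up k, w k ν * (SYTCount ν : ℤ)
      = w k μ * SYTCount μ + ∑ ν ∈ (Up k).erase μ, w k ν * SYTCount ν := by
    intro k hk
    rw [mem_Dn] at hk
    rw [add_sum_erase (Up k) (fun ν => w k ν * (SYTCount ν : ℤ)) (mem_Up.2 hk)]
  rw [sum_congr rfl h1, sum_congr rfl h2, sum_add_distrib, sum_add_distrib, ← sum_mul, ← sum_mul,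
    hδ, add_mul, add_assoc]
  congr 2
  rw [sum_sigma', sum_sigma']
  apply sum_bij' (fun p _ => (⟨μ ⊓ p.2, p.2⟩ : (_ : YoungDiagram) × YoungDiagram))
    (fun p _ => (⟨μ ⊔ p.2, p.2⟩ : (_ : YoungDiagram) × YoungDiagram))
  · rintro ⟨l, ν⟩ h
    simp only [mem_sigma, mem_erase, mem_Up, mem_Dn] at h ⊢
    have := swap_down h.1 h.2.2 h.2.1
    exact ⟨this.2.1, h.2.1, this.2.2⟩
  · rintro ⟨l, ν⟩ h
    simp only [mem_sigma, mem_erase, mem_Up, mem_Dn] at h ⊢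
    have := swap_up h.1 h.2.2 h.2.1
    exact ⟨this.2.1, h.2.1, this.2.2⟩
  · rintro ⟨l, ν⟩ h
    simp only [mem_sigma, mem_erase, mem_Up, mem_Dn] at h ⊢
    rw [(swap_down h.1 h.2.2 h.2.1).1]
  · rintro ⟨l, ν⟩ h
    simp only [mem_sigma, mem_erase, mem_Up, mem_Dn] at h ⊢
    rw [(swap_up h.1 h.2.2 h.2.1).1]
  · rintro ⟨l, ν⟩ h
    simp only [mem_sigma, mem_erase, mem_Up, mem_Dn] at h ⊢
    rw [← hw, (swap_down h.1 h.2.2 h.2.1).1]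

/-! ### Corners -/

def ct (c : ℕ × ℕ) : ℤ := (c.2 : ℤ) - (c.1 : ℤ)

def C (μ : YoungDiagram) : ℤ := ∑ c ∈ μ.cells, ct c

lemma C_mod (μ ν : YoungDiagram) : C (μ ⊔ ν) - C μ = C ν - C (μ ⊓ ν) := by
  have : C (μ ⊔ ν) + C (μ ⊓ ν) = C μ + C ν := by
    simp only [C, YoungDiagram.cells_sup, YoungDiagram.cells_inf]
    exact sum_union_inter
  linarith

def IsAdd (μ : YoungDiagram) (i : ℕ) : Prop := i = 0 ∨ μ.rowLen i < μ.rowLen (i - 1)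

def IsRem (μ : YoungDiagram) (i : ℕ) : Prop := μ.rowLen (i + 1) < μ.rowLen i

lemma addBox_iff {μ l : YoungDiagram} :
    AddBox μ l ↔ ∃ c, c ∉ μ.cells ∧ l.cells = insert c μ.cells := by
  constructor
  · rintro ⟨hle, hc⟩
    have hone : (l.cells \ μ.cells).card = 1 := by
      have := Finset.card_sdiff_add_card_eq_card (YoungDiagram.cells_subset_iff.2 hle)
      simp only [YoungDiagram.card] at hc
      omega
    obtain ⟨z, hz⟩ := Finset.card_eq_one.1 hone
    refine ⟨z, ?_, ?_⟩
    · have : z ∈ l.cells \ μ.cells := by rw [hz]; simp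
      exact (mem_sdiff.1 this).2
    · rw [insert_eq, ← hz, sdiff_union_of_subset (YoungDiagram.cells_subset_iff.2 hle)]
  · rintro ⟨c, hc, h⟩
    refine ⟨?_, ?_⟩
    · rw [← YoungDiagram.cells_subset_iff, h]; exact subset_insert _ _
    · simp only [YoungDiagram.card]; rw [h, card_insert_of_notMem hc]

lemma C_insert {μ l : YoungDiagram} {c : ℕ × ℕ} (hc : c ∉ μ.cells) (h : l.cells = insert c μ.cells) :
    C l = ct c + C μ := by
  simp only [C]; rw [h, sum_insert hc]

noncomputable def addRow (μ : YoungDiagram) (i : ℕ) (h : IsAdd μ i) : YoungDiagram :=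
  ⟨insert (i, μ.rowLen i) μ.cells, by
    rintro ⟨a, b⟩ ⟨a', b'⟩ hle hmem
    obtain ⟨hl1, hl2⟩ : a' ≤ a ∧ b' ≤ b := hle
    simp only [coe_insert, Set.mem_insert_iff, mem_coe, Prod.mk.injEq, YoungDiagram.mem_cells]
      at hmem ⊢
    rcases hmem with ⟨rfl, rfl⟩ | hmem
    · rcases Nat.lt_or_ge a' a with h1 | h1
      · right
        rw [YoungDiagram.mem_iff_lt_rowLen]
        rcases h with h | h
        · omega
        · have := μ.rowLen_anti a' (a - 1) (by omega)
          omega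
      · obtain rfl : a' = a := by omega
        rw [YoungDiagram.mem_iff_lt_rowLen]
        omega
    · right; exact μ.up_left_mem hl1 hl2 hmem⟩

noncomputable def remRow (μ : YoungDiagram) (i : ℕ) (h : IsRem μ i) : YoungDiagram :=
  ⟨μ.cells.erase (i, μ.rowLen i - 1), by
    rintro ⟨a, b⟩ ⟨a', b'⟩ hle hmem
    obtain ⟨hl1, hl2⟩ : a' ≤ a ∧ b' ≤ b := hle
    simp only [coe_erase, Set.mem_sdiff, Set.mem_singleton_iff, mem_coe, Prod.mk.injEq,
      YoungDiagram.mem_cells] at hmem ⊢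
    refine ⟨μ.up_left_mem hl1 hl2 hmem.1, ?_⟩
    rintro ⟨rfl, rfl⟩
    have h1 := hmem.1
    have h2 := hmem.2
    rw [YoungDiagram.mem_iff_lt_rowLen] at h1
    unfold IsRem at h
    rcases Nat.lt_or_ge a' a with h3 | h3
    · have := μ.rowLen_anti (a' + 1) a (by omega)
      omega
    · obtain rfl : a' = a := by omega
      apply h2
      omega⟩

lemma notMem_add (μ : YoungDiagram) (i : ℕ) : (i, μ.rowLen i) ∉ μ.cells := by
  rw [YoungDiagram.mem_cells, YoungDiagram.mem_iff_lt_rowLen]; simp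

lemma sum_Up (μ : YoungDiagram) (g : ℤ → ℤ) (N : ℕ) (hN : μ.card < N) :
    ∑ l ∈ Up μ, g (C l - C μ)
      = ∑ i ∈ range N, if IsAdd μ i then g ((μ.rowLen i : ℤ) - i) else 0 := by
  rw [← sum_filter]
  symm
  apply sum_bij (fun i hi => addRow μ i (mem_filter.1 hi).2)
  · intro i hi
    rw [mem_Up, addBox_iff]
    exact ⟨_, notMem_add μ i, rfl⟩
  · intro i hi j hj h
    have h' := congrArg YoungDiagram.cells h
    simp only [addRow] at h'
    have : (i, μ.rowLen i) ∈ insert (j, μ.rowLen j) μ.cells := by rw [← h']; simp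
    rw [mem_insert] at this
    rcases this with h | h
    · exact (Prod.mk.inj h).1
    · exact absurd h (notMem_add μ i)
  · intro l hl
    rw [mem_Up, addBox_iff] at hl
    obtain ⟨⟨i, j⟩, hc, h⟩ := hl
    have hmem : ∀ x, x ∈ l ↔ x = (i, j) ∨ x ∈ μ := by
      intro x; rw [← YoungDiagram.mem_cells, h]; simp
    rw [YoungDiagram.mem_cells, YoungDiagram.mem_iff_lt_rowLen] at hc
    have hj : j = μ.rowLen i := by
      by_contra hne
      have : (i, μ.rowLen i) ∈ l :=
        l.up_left_mem le_rfl (by omega : μ.rowLen i ≤ j) ((hmem _).2 (Or.inl rfl))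
      rw [hmem] at this
      rcases this with h | h
      · exact hne (Prod.mk.inj h).2.symm
      · exact notMem_add μ i h
    subst hj
    have hadd : IsAdd μ i := by
      by_cases hi : i = 0
      · exact Or.inl hi
      · right
        have : (i - 1, μ.rowLen i) ∈ l :=
          l.up_left_mem (by omega : i - 1 ≤ i) le_rfl ((hmem _).2 (Or.inl rfl))
        rw [hmem] at this
        rcases this with h | h
        · have := (Prod.mk.inj h).1; omega
        · rwa [YoungDiagram.mem_iff_lt_rowLen] at h
    have hiN : i < N := by
      by_cases hi : i = 0
      · omega
      · rcases hadd with h | h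
        · omega
        · rw [← YoungDiagram.mem_iff_lt_rowLen] at h
          have := (cell_lt_card μ _ _ h).1
          omega
    exact ⟨i, mem_filter.2 ⟨mem_range.2 hiN, hadd⟩, YoungDiagram.ext h.symm⟩
  · intro i hi
    rw [C_insert (l := addRow μ i (mem_filter.1 hi).2) (notMem_add μ i) rfl]
    simp [ct]

lemma sum_Dn (μ : YoungDiagram) (g : ℤ → ℤ) (N : ℕ) (hN : μ.card ≤ N) :
    ∑ k ∈ Dn μ, g (C μ - C k)
      = ∑ i ∈ range N, if IsRem μ i then g ((μ.rowLen i : ℤ) - 1 - i) else 0 := by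
  have key : ∀ i, IsRem μ i → (i, μ.rowLen i - 1) ∈ μ.cells := by
    intro i hi
    unfold IsRem at hi
    rw [YoungDiagram.mem_cells, YoungDiagram.mem_iff_lt_rowLen]
    omega
  rw [← sum_filter]
  symm
  apply sum_bij (fun i hi => remRow μ i (mem_filter.1 hi).2)
  · intro i hi
    rw [mem_Dn, addBox_iff]
    exact ⟨_, notMem_erase _ _, (insert_erase (key i (mem_filter.1 hi).2)).symm⟩
  · intro i hi j hj h
    have h' := congrArg YoungDiagram.cells h
    simp only [remRow] at h'
    have : (i, μ.rowLen i - 1) ∉ μ.cells.erase (j, μ.rowLen j - 1) := by rw [← h']; simp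
    rw [mem_erase] at this
    by_contra hne
    apply this
    exact ⟨fun h => hne (Prod.mk.inj h).1, key i (mem_filter.1 hi).2⟩
  · intro k hk
    rw [mem_Dn, addBox_iff] at hk
    obtain ⟨⟨i, j⟩, hc, h⟩ := hk
    have hmem : ∀ x, x ∈ μ ↔ x = (i, j) ∨ x ∈ k := by
      intro x; rw [← YoungDiagram.mem_cells, h]; simp
    have hij : (i, j) ∈ μ := (hmem _).2 (Or.inl rfl)
    have hij' := hij
    rw [YoungDiagram.mem_iff_lt_rowLen] at hij
    have hj : j = μ.rowLen i - 1 := by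
      by_contra hne
      have : (i, j + 1) ∈ μ := by rw [YoungDiagram.mem_iff_lt_rowLen]; omega
      rw [hmem] at this
      rcases this with h | h
      · have := (Prod.mk.inj h).2; omega
      · exact hc (k.up_left_mem le_rfl (by omega) h)
    have hrem : IsRem μ i := by
      unfold IsRem
      by_contra hlt
      have : (i + 1, j) ∈ μ := by rw [YoungDiagram.mem_iff_lt_rowLen]; omega
      rw [hmem] at this
      rcases this with h | h
      · have := (Prod.mk.inj h).1; omega
      · exact hc (k.up_left_mem (by omega) le_rfl h)
    have hiN := (cell_lt_card μ _ _ hij').1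
    refine ⟨i, mem_filter.2 ⟨mem_range.2 (by omega), hrem⟩, YoungDiagram.ext ?_⟩
    simp only [remRow]
    rw [← hj, h, erase_insert hc]
  · intro i hi
    have hk := key i (mem_filter.1 hi).2
    rw [C_insert (μ := remRow μ i (mem_filter.1 hi).2) (l := μ) (notMem_erase _ _)
      (insert_erase hk).symm]
    have : 1 ≤ μ.rowLen i := by
      have := (mem_filter.1 hi).2
      unfold IsRem at this
      omega
    simp [ct, Nat.cast_sub this]

lemma corner (μ : YoungDiagram) (g : ℤ → ℤ) (N : ℕ) :
    ∑ i ∈ range (N + 1), (if IsAdd μ i then g ((μ.rowLen i : ℤ) - i) else 0)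
      = g (μ.rowLen 0) + ∑ i ∈ range N, (if IsRem μ i then g ((μ.rowLen i : ℤ) - 1 - i) else 0)
        + ∑ i ∈ range N, (g ((μ.rowLen (i + 1) : ℤ) - 1 - i) - g ((μ.rowLen i : ℤ) - 1 - i)) := by
  rw [sum_range_succ', add_assoc, ← sum_add_distrib, add_comm]
  congr 1
  · simp [IsAdd]
  · apply sum_congr rfl
    intro i _
    have hiff : IsAdd μ (i + 1) ↔ IsRem μ i := by simp [IsAdd, IsRem]
    by_cases h : IsRem μ i
    · simp only [hiff, h, if_true]
      push_cast
      rw [show (μ.rowLen (i + 1) : ℤ) - (i + 1) = (μ.rowLen (i + 1) : ℤ) - 1 - i by ring]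
      ring
    · simp only [hiff, h, if_false]
      have h1 := μ.rowLen_anti i (i + 1) (by omega)
      have : μ.rowLen (i + 1) = μ.rowLen i := by unfold IsRem at h; omega
      rw [this]; ring

lemma corner_one (μ : YoungDiagram) :
    ∑ l ∈ Up μ, (1 : ℤ) = 1 + ∑ k ∈ Dn μ, (1 : ℤ) := by
  have h1 := sum_Up μ (fun _ => 1) (μ.card + 1) (by omega)
  have h2 := sum_Dn μ (fun _ => 1) μ.card le_rfl
  have h3 := corner μ (fun _ => 1) μ.card
  simp only [sub_self, sum_const_zero, add_zero] at h3
  rw [h1, h3, h2]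

lemma corner_C (μ : YoungDiagram) :
    ∑ l ∈ Up μ, (C l - C μ) = 0 + ∑ k ∈ Dn μ, (C μ - C k) := by
  have h1 := sum_Up μ (fun x => x) (μ.card + 1) (by omega)
  have h2 := sum_Dn μ (fun x => x) μ.card le_rfl
  have h3 := corner μ (fun x => x) μ.card
  have h4 : ∑ i ∈ range μ.card, ((μ.rowLen (i + 1) : ℤ) - 1 - i - ((μ.rowLen i : ℤ) - 1 - i))
      = (μ.rowLen μ.card : ℤ) - μ.rowLen 0 := by
    rw [← sum_range_sub (fun i => (μ.rowLen i : ℤ))]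
    apply sum_congr rfl
    intro i _
    ring
  have h5 : μ.rowLen μ.card = 0 := by
    by_contra h
    have : (μ.card, 0) ∈ μ := by rw [YoungDiagram.mem_iff_lt_rowLen]; omega
    have := (cell_lt_card μ _ _ this).1
    omega
  rw [h4, h5] at h3
  rw [h1, h3, h2]
  push_cast
  ring

lemma sum_up_count (n : ℕ) : ∀ μ : YoungDiagram, μ.card = n →
    ∑ l ∈ Up μ, (SYTCount l : ℤ) = (n + 1) * SYTCount μ := by
  induction n with
  | zero =>
    intro μ hμ
    have := step (fun _ _ => 1) (fun _ _ => rfl) 1 corner_one μ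
    simp only [one_mul] at this
    rw [this]
    have : Dn μ = ∅ := by
      rw [eq_empty_iff_forall_notMem]
      intro k hk
      have := (mem_Dn.1 hk).2
      omega
    rw [this]; simp
  | succ n ih =>
    intro μ hμ
    have := step (fun _ _ => 1) (fun _ _ => rfl) 1 corner_one μ
    simp only [one_mul] at this
    rw [this, sum_congr rfl (fun k hk => ih k (by have := (mem_Dn.1 hk).2; omega)), ← mul_sum,
      count_rec μ (by omega)]
    push_cast
    ring

lemma sum_up_C (n : ℕ) : ∀ μ : YoungDiagram, μ.card = n →
    ∑ l ∈ Up μ, (C l - C μ) * (SYTCount l : ℤ) = 0 := by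
  induction n with
  | zero =>
    intro μ hμ
    rw [step (fun μ l => C l - C μ) C_mod 0 corner_C μ]
    have : Dn μ = ∅ := by
      rw [eq_empty_iff_forall_notMem]
      intro k hk
      have := (mem_Dn.1 hk).2
      omega
    rw [this]; simp
  | succ n ih =>
    intro μ hμ
    rw [step (fun μ l => C l - C μ) C_mod 0 corner_C μ,
      sum_congr rfl (fun k hk => ih k (by have := (mem_Dn.1 hk).2; omega))]
    simp

/-! ### Paths of length two -/

noncomputable def Mid (ρ l : YoungDiagram) : Finset YoungDiagram :=
  (Y (ρ.card + 1)).filter (fun μ => AddBox ρ μ ∧ AddBox μ l)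

lemma mem_Mid {ρ l μ : YoungDiagram} : μ ∈ Mid ρ l ↔ AddBox ρ μ ∧ AddBox μ l := by
  simp only [Mid, mem_filter, mem_Y]
  constructor
  · exact fun h => h.2
  · exact fun h => ⟨h.1.2, h⟩

lemma exists_ins {ρ l : YoungDiagram} {a b : ℕ × ℕ} (hle : ρ ≤ l)
    (hd : ∀ x, (x ∈ l ∧ x ∉ ρ) ↔ (x = a ∨ x = b)) (hab : a ≠ b) (hba : ¬ b ≤ a) :
    ∃ μ ∈ Mid ρ l, μ.cells = insert a ρ.cells ∧ C μ = ct a + C ρ ∧ C l = ct b + C μ := by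
  have ha := (hd a).2 (Or.inl rfl)
  have hb := (hd b).2 (Or.inr rfl)
  let μ : YoungDiagram := ⟨insert a ρ.cells, by
    intro x y hyx hx
    simp only [coe_insert, Set.mem_insert_iff, mem_coe, YoungDiagram.mem_cells] at hx ⊢
    rcases hx with rfl | hx
    · by_contra hcon
      have hy : y ∈ l := l.up_left_mem hyx.1 hyx.2 ha.1
      rcases (hd y).1 ⟨hy, fun h => hcon (Or.inr h)⟩ with h | h
      · exact hcon (Or.inl h)
      · exact hba (h ▸ hyx)
    · exact Or.inr (ρ.up_left_mem hyx.1 hyx.2 hx)⟩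
  have e1 : μ.cells = insert a ρ.cells := rfl
  have na : a ∉ ρ.cells := ha.2
  have nb : b ∉ μ.cells := by
    rw [e1, mem_insert]
    rintro (h | h)
    · exact hab h.symm
    · exact hb.2 h
  have e2 : l.cells = insert b μ.cells := by
    ext x
    rw [e1]
    simp only [mem_insert, YoungDiagram.mem_cells]
    have := hd x
    have hx : x ∈ ρ → x ∈ l := fun h => hle h
    tauto
  exact ⟨μ, mem_Mid.2 ⟨addBox_iff.2 ⟨a, na, e1⟩, addBox_iff.2 ⟨b, nb, e2⟩⟩, e1,
    C_insert na e1, C_insert nb e2⟩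

lemma mid_cases {ρ l μ : YoungDiagram} {a b : ℕ × ℕ}
    (hd : ∀ x, (x ∈ l ∧ x ∉ ρ) ↔ (x = a ∨ x = b)) (h : μ ∈ Mid ρ l) :
    μ.cells = insert a ρ.cells ∨ μ.cells = insert b ρ.cells := by
  rw [mem_Mid] at h
  obtain ⟨c, hc, e⟩ := addBox_iff.1 h.1
  have hcl : c ∈ l := h.2.1 (by
    show c ∈ μ.cells
    rw [e]; simp)
  rcases (hd c).1 ⟨hcl, hc⟩ with rfl | rfl
  · exact Or.inl e
  · exact Or.inr e

lemma mid_sum_aux {ρ l : YoungDiagram} {a b : ℕ × ℕ} (hle : ρ ≤ l)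
    (hd : ∀ x, (x ∈ l ∧ x ∉ ρ) ↔ (x = a ∨ x = b)) (hab : a ≠ b) (hba : ¬ b ≤ a) :
    ∑ μ ∈ Mid ρ l, ((C l - C μ) - (C μ - C ρ))
      = (if AddDominoH ρ l then 1 else 0) - (if AddDominoV ρ l then 1 else 0) := by
  have ha := (hd a).2 (Or.inl rfl)
  have hb := (hd b).2 (Or.inr rfl)
  have hset : l.cells \ ρ.cells = {a, b} := by
    ext x
    have := hd x
    simpa using this
  obtain ⟨μ, hμ, e1, e2, e3⟩ := exists_ins hle hd hab hba
  -- dominoes in terms of `a`, `b`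
  have hH : AddDominoH ρ l ↔ b = (a.1, a.2 + 1) := by
    constructor
    · rintro ⟨-, i, j, h⟩
      rw [hset] at h
      have m1 : a ∈ ({(i, j), (i, j + 1)} : Finset (ℕ × ℕ)) := by rw [← h]; simp
      have m2 : b ∈ ({(i, j), (i, j + 1)} : Finset (ℕ × ℕ)) := by rw [← h]; simp
      simp only [mem_insert, mem_singleton] at m1 m2
      rcases m1 with rfl | rfl <;> rcases m2 with rfl | rfl
      · exact absurd rfl hab
      · rfl
      · exact absurd (Prod.mk_le_mk.2 ⟨le_rfl, by omega⟩) hba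
      · exact absurd rfl hab
    · intro h
      exact ⟨hle, a.1, a.2, by rw [hset, h]⟩
  have hV : AddDominoV ρ l ↔ b = (a.1 + 1, a.2) := by
    constructor
    · rintro ⟨-, i, j, h⟩
      rw [hset] at h
      have m1 : a ∈ ({(i, j), (i + 1, j)} : Finset (ℕ × ℕ)) := by rw [← h]; simp
      have m2 : b ∈ ({(i, j), (i + 1, j)} : Finset (ℕ × ℕ)) := by rw [← h]; simp
      simp only [mem_insert, mem_singleton] at m1 m2
      rcases m1 with rfl | rfl <;> rcases m2 with rfl | rfl
      · exact absurd rfl hab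
      · rfl
      · exact absurd (Prod.mk_le_mk.2 ⟨by omega, le_rfl⟩) hba
      · exact absurd rfl hab
    · intro h
      exact ⟨hle, a.1, a.2, by rw [hset, h]⟩
  rw [if_congr hH rfl rfl, if_congr hV rfl rfl]
  by_cases hle' : a ≤ b
  · have hM : Mid ρ l = {μ} := by
      ext ν
      rw [mem_singleton]
      constructor
      · intro hν
        rcases mid_cases hd hν with h | h
        · exact YoungDiagram.ext (h.trans e1.symm)
        · exfalso
          have hbν : b ∈ ν := by
            show b ∈ ν.cells
            rw [h]; simp
          have haν : a ∈ ν.cells := ν.up_left_mem hle'.1 hle'.2 hbν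
          rw [h, mem_insert] at haν
          rcases haν with h | h
          · exact hab h
          · exact ha.2 h
      · rintro rfl; exact hμ
    rw [hM, sum_singleton]
    have hval : (C l - C μ) - (C μ - C ρ) = ct b - ct a := by linarith
    rw [hval]
    obtain ⟨a1, a2⟩ := a
    obtain ⟨b1, b2⟩ := b
    obtain ⟨l1, l2⟩ : a1 ≤ b1 ∧ a2 ≤ b2 := hle'
    have between : ∀ x y, a1 ≤ x → x ≤ b1 → a2 ≤ y → y ≤ b2 →
        ((x, y) = (a1, a2) ∨ (x, y) = (b1, b2)) := by
      intro x y h1 h2 h3 h4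
      exact (hd (x, y)).1 ⟨l.up_left_mem h2 h4 hb.1, fun h => ha.2 (ρ.up_left_mem h1 h3 h)⟩
    rcases Nat.lt_or_ge a1 b1 with h1 | h1
    · have := between (a1 + 1) a2 (by omega) (by omega) le_rfl l2
      simp only [Prod.mk.injEq] at this
      obtain ⟨rfl, rfl⟩ : b1 = a1 + 1 ∧ b2 = a2 := by omega
      simp [ct]
    · obtain rfl : b1 = a1 := by omega
      have hne : a2 ≠ b2 := fun h => hab (by rw [h])
      have := between b1 (a2 + 1) le_rfl le_rfl (by omega) (by omega)
      simp only [Prod.mk.injEq] at this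
      obtain rfl : b2 = a2 + 1 := by omega
      simp [ct]
  · have hd' : ∀ x, (x ∈ l ∧ x ∉ ρ) ↔ (x = b ∨ x = a) := fun x => (hd x).trans or_comm
    obtain ⟨μ', hμ', f1, f2, f3⟩ := exists_ins hle hd' hab.symm hle'
    have hne : μ ≠ μ' := by
      rintro rfl
      have : a ∈ insert b ρ.cells := by rw [← f1, e1]; simp
      rw [mem_insert] at this
      rcases this with h | h
      · exact hab h
      · exact ha.2 h
    have hM : Mid ρ l = {μ, μ'} := by
      ext ν
      rw [mem_insert, mem_singleton]
      constructor
      · intro hν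
        rcases mid_cases hd hν with h | h
        · exact Or.inl (YoungDiagram.ext (h.trans e1.symm))
        · exact Or.inr (YoungDiagram.ext (h.trans f1.symm))
      · rintro (rfl | rfl)
        · exact hμ
        · exact hμ'
    rw [hM, sum_pair hne, if_neg, if_neg]
    · linarith
    · rintro rfl
      exact hle' ⟨by simp, by simp⟩
    · rintro rfl
      exact hle' ⟨by simp, by simp⟩

lemma domino_card {ρ l : YoungDiagram} (hle : ρ ≤ l) {a b : ℕ × ℕ} (hab : a ≠ b)
    (h : l.cells \ ρ.cells = {a, b}) : l.card = ρ.card + 2 := by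
  have := Finset.card_sdiff_add_card_eq_card (YoungDiagram.cells_subset_iff.2 hle)
  rw [h, card_pair hab] at this
  simp only [YoungDiagram.card]
  omega

lemma mid_sum (ρ l : YoungDiagram) (hc : l.card = ρ.card + 2) :
    ∑ μ ∈ Mid ρ l, ((C l - C μ) - (C μ - C ρ))
      = (if AddDominoH ρ l then 1 else 0) - (if AddDominoV ρ l then 1 else 0) := by
  by_cases hle : ρ ≤ l
  · have htwo : (l.cells \ ρ.cells).card = 2 := by
      have := Finset.card_sdiff_add_card_eq_card (YoungDiagram.cells_subset_iff.2 hle)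
      simp only [YoungDiagram.card] at hc
      omega
    obtain ⟨a, b, hab, h⟩ := Finset.card_eq_two.1 htwo
    have hd : ∀ x, (x ∈ l ∧ x ∉ ρ) ↔ (x = a ∨ x = b) := by
      intro x
      have : x ∈ l.cells \ ρ.cells ↔ x ∈ ({a, b} : Finset (ℕ × ℕ)) := by rw [h]
      simpa using this
    by_cases hba : b ≤ a
    · exact mid_sum_aux hle (fun x => (hd x).trans or_comm) hab.symm
        (fun h => hab (le_antisymm h hba))
    · exact mid_sum_aux hle hd hab hba
  · have hM : Mid ρ l = ∅ := by
      rw [eq_empty_iff_forall_notMem]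
      intro μ hμ
      rw [mem_Mid] at hμ
      exact hle (hμ.1.1.trans hμ.2.1)
    rw [hM, if_neg (fun h => hle h.1), if_neg (fun h => hle h.1)]
    simp

lemma total (ρ : YoungDiagram) :
    ∑ l ∈ Y (ρ.card + 2), ((if AddDominoH ρ l then 1 else 0) - (if AddDominoV ρ l then 1 else 0))
      * (SYTCount l : ℤ) = 0 := by
  have h1 : ∑ l ∈ Y (ρ.card + 2),
      ((if AddDominoH ρ l then 1 else 0) - (if AddDominoV ρ l then 1 else 0)) * (SYTCount l : ℤ)
      = ∑ l ∈ Y (ρ.card + 2), ∑ μ ∈ Mid ρ l,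
        ((C l - C μ) - (C μ - C ρ)) * (SYTCount l : ℤ) := by
    apply sum_congr rfl
    intro l hl
    rw [← mid_sum ρ l (mem_Y.1 hl), sum_mul]
  have h2 : ∑ l ∈ Y (ρ.card + 2), ∑ μ ∈ Mid ρ l,
        ((C l - C μ) - (C μ - C ρ)) * (SYTCount l : ℤ)
      = ∑ μ ∈ Up ρ, ∑ l ∈ Up μ, ((C l - C μ) - (C μ - C ρ)) * (SYTCount l : ℤ) := by
    apply sum_comm'
    intro l μ
    rw [mem_Y, mem_Mid, mem_Up, mem_Up]
    constructor
    · rintro ⟨-, h1, h2⟩; exact ⟨h2, h1⟩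
    · rintro ⟨h2, h1⟩
      have := h1.2
      have := h2.2
      exact ⟨by omega, h1, h2⟩
  have h3 : ∀ μ ∈ Up ρ, ∑ l ∈ Up μ, ((C l - C μ) - (C μ - C ρ)) * (SYTCount l : ℤ)
      = -((ρ.card : ℤ) + 2) * ((C μ - C ρ) * (SYTCount μ : ℤ)) := by
    intro μ hμ
    have hc := (mem_Up.1 hμ).2
    simp only [sub_mul _ (C μ - C ρ)]
    rw [sum_sub_distrib, sum_up_C _ μ rfl, ← mul_sum, sum_up_count _ μ rfl, hc]
    push_cast
    ring
  rw [h1, h2, sum_congr rfl h3, ← mul_sum, sum_up_C _ ρ rfl, mul_zero]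

lemma finsum_conv (ρ : YoungDiagram) (P : YoungDiagram → Prop)
    (hP : ∀ l, P l → l.card = ρ.card + 2) :
    ∑ᶠ l ∈ {l : YoungDiagram | P l}, (SYTCount l : ℤ)
      = ∑ l ∈ Y (ρ.card + 2), (if P l then 1 else 0) * (SYTCount l : ℤ) := by
  have : {l : YoungDiagram | P l} = ↑((Y (ρ.card + 2)).filter P) := by
    ext l
    simp only [Set.mem_ofPred_eq, coe_filter, mem_Y]
    exact ⟨fun h => ⟨hP l h, h⟩, fun h => h.2⟩
  rw [this, finsum_mem_coe_finset, sum_filter]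
  apply sum_congr rfl
  intro l _
  split_ifs <;> simp

end DominoProof

open DominoProof in
theorem stmt7 (ρ : YoungDiagram) :
    (∑ᶠ lam ∈ {lam : YoungDiagram | AddDominoH ρ lam}, (SYTCount lam : ℤ))
      - ∑ᶠ lam ∈ {lam : YoungDiagram | AddDominoV ρ lam}, (SYTCount lam : ℤ) = 0 := by
  rw [finsum_conv ρ (AddDominoH ρ), finsum_conv ρ (AddDominoV ρ), ← sum_sub_distrib]
  · refine Eq.trans ?_ (total ρ)
    apply sum_congr rfl
    intro l _
    rw [sub_mul]
  · rintro l ⟨hle, i, j, h⟩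
    exact domino_card hle (by simp) h
  · rintro l ⟨hle, i, j, h⟩
    exact domino_card hle (by simp) h
end

section
/- For every n ≥ 0, Σ_{λ ⊢ n} (F_λ²/n!) · l_λ^(α)(x) = (x+α)^n, where the sum runs over all partitions λ of n, F_λ is the number of standard Young tableaux of shape λ, and l_λ^(α) is the monic Wronskian Laguerre polynomial associated to λ. -/
open Polynomial Finset

/-- Modified Laguerre polynomials, defined by `l_0 = 1`, `l_1 = x + α`,
`l_n = (x+α-n+1) l_{n-1} + x(n-1) l_{n-2}`. -/
noncomputable def lm (α : ℝ) : ℕ → Polynomial ℝ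
  | 0 => 1
  | 1 => X + C α
  | (n + 2) =>
      (X + C (α - ((n : ℝ) + 2) + 1)) * lm α (n + 1) + X * C ((n : ℝ) + 1) * lm α n

/-- The Wronskian of a family of polynomials. -/
noncomputable def Wr {r : ℕ} (p : Fin r → Polynomial ℝ) : Polynomial ℝ :=
  Matrix.det (Matrix.of fun i j : Fin r => derivative^[(i : ℕ)] (p j))

/-- The Wronskian Laguerre polynomial
`l_μ^(α) = Wr[l_{n_1}, …, l_{n_r}] / ∏_{i<j} (n_j - n_i)` where `(n_i)` is the degree vector. -/
noncomputable def lW (α : ℝ) (μ : YoungDiagram) : Polynomial ℝ :=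
  C (∏ p ∈ Finset.univ.filter (fun p : Fin (nrows μ) × Fin (nrows μ) => p.1 < p.2),
        ((degVec μ p.2 : ℝ) - (degVec μ p.1 : ℝ)))⁻¹
    * Wr (fun i => lm α (degVec μ i))


namespace WL

lemma sum_updateCol_eq {n : Type*} [Fintype n] [DecidableEq n] {R : Type*} [CommRing R]
    (M M' : Matrix n n R) :
    ∑ j, (M.updateCol j (fun i => M' i j)).det = ∑ i, (M.updateRow i (M' i)).det := by
  simp only [Matrix.det_apply]
  rw [Finset.sum_comm]
  conv_rhs => rw [Finset.sum_comm]
  refine Finset.sum_congr rfl fun σ _ => ?_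
  rw [← Equiv.sum_comp σ (fun i => Equiv.Perm.sign σ • ∏ k, (M.updateRow i (M' i)) (σ k) k)]
  refine Finset.sum_congr rfl fun j _ => ?_
  congr 1
  refine Finset.prod_congr rfl fun i _ => ?_
  by_cases hij : i = j
  · subst hij; simp [Matrix.updateRow_apply]
  · simp [Matrix.updateRow_apply, hij]

def JT {R : Type*} [CommRing R] (h : ℤ → R) (N : ℕ) (f : ℕ → ℤ) : R :=
  Matrix.det (Matrix.of fun i j : Fin N => h (f j - (j : ℕ) + (i : ℕ)))

lemma JT_stab {R : Type*} [CommRing R] (h : ℤ → R) (h0 : h 0 = 1) (hneg : ∀ k < 0, h k = 0)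
    (N : ℕ) (f : ℕ → ℤ) (hf : f N = 0) : JT h (N + 1) f = JT h N f := by
  unfold JT
  rw [Matrix.det_succ_column _ (Fin.last N), Finset.sum_eq_single (Fin.last N)]
  · simp only [Matrix.of_apply, Fin.val_last, hf]
    rw [show (0 - (N : ℤ) + N) = 0 by ring, h0, ← two_mul]
    simp only [pow_mul, neg_one_sq, one_pow, one_mul]
    congr 1
    ext i j
    simp [Fin.succAbove_last]
  · intro i _ hi
    have : (i : ℕ) < N := Fin.val_lt_last hi
    simp only [Matrix.of_apply, Fin.val_last, hf]
    rw [hneg _ (by omega)]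
    simp
  · simp

lemma JT_up {R : Type*} [CommRing R] (h : ℤ → R) (hneg : ∀ k < 0, h k = 0)
    (N : ℕ) (f : ℕ → ℤ) (hf : f N = 0) :
    ∑ j : Fin (N + 1), JT h (N + 1) (fun i => f i + if i = j then 1 else 0)
      = h 1 * JT h N f := by
  have e : ∀ j : Fin (N + 1), JT h (N + 1) (fun i => f i + if i = j then 1 else 0) =
      ((Matrix.of fun i j : Fin (N + 1) => h (f j - (j : ℕ) + (i : ℕ))).updateCol j
        (fun i => (Matrix.of fun i j : Fin (N + 1) => h (f j - (j : ℕ) + (i : ℕ) + 1)) i j)).det := by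
    intro j
    unfold JT
    congr 1
    ext i k
    simp only [Matrix.updateCol_apply, Matrix.of_apply, Fin.ext_iff]
    split_ifs with hk
    · rw [hk]; congr 1; ring
    · simp
  simp only [e]
  rw [sum_updateCol_eq, Finset.sum_eq_single (Fin.last N)]
  · rw [Matrix.det_succ_column _ (Fin.last N), Finset.sum_eq_single (Fin.last N)]
    · simp only [Matrix.updateRow_self, Matrix.of_apply, Fin.val_last, hf]
      rw [show (0 - (N : ℤ) + N + 1) = 1 by ring, ← two_mul]
      simp only [pow_mul, neg_one_sq, one_pow, one_mul]
      congr 1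
      unfold JT
      congr 1
      ext i j
      simp [Fin.succAbove_last, Matrix.updateRow_apply, Fin.ext_iff, i.2.ne]
    · intro i _ hi
      have : (i : ℕ) < N := Fin.val_lt_last hi
      rw [Matrix.updateRow_ne hi]
      simp only [Matrix.of_apply, Fin.val_last, hf]
      rw [hneg _ (by omega)]
      simp
    · simp
  · intro i _ hi
    have : (i : ℕ) < N := Fin.val_lt_last hi
    have hne : i ≠ ⟨i + 1, by omega⟩ := by simp [Fin.ext_iff]
    refine Matrix.det_zero_of_row_eq hne ?_
    rw [Matrix.updateRow_self, Matrix.updateRow_ne hne.symm]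
    ext j
    simp only [Matrix.of_apply]
    congr 1
    push_cast
    ring
  · simp

lemma JT_down {R : Type*} [CommRing R] (a : ℤ → R) (ha : ∀ k : ℤ, a (k - 1) = k * a k)
    (N : ℕ) (f : ℕ → ℤ) :
    ∑ j : Fin N, JT a N (fun i => f i - if i = j then 1 else 0)
      = ((∑ j ∈ range N, f j : ℤ) : R) * JT a N f := by
  unfold JT
  simp only [Matrix.det_apply]
  rw [Finset.sum_comm, Finset.mul_sum]
  refine Finset.sum_congr rfl fun σ _ => ?_
  rw [← Finset.smul_sum, mul_smul_comm]
  congr 1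
  have hs : (∑ j ∈ range N, f j : ℤ) = ∑ j : Fin N, (f j - (j : ℕ) + (σ j : ℕ)) := by
    rw [Finset.sum_add_distrib, Finset.sum_sub_distrib,
      Equiv.sum_comp σ (fun j : Fin N => ((j : ℕ) : ℤ)), Finset.sum_range]
    ring
  rw [hs, Int.cast_sum, Finset.sum_mul]
  refine Finset.sum_congr rfl fun j _ => ?_
  rw [← Finset.mul_prod_erase _ _ (Finset.mem_univ j), ← Finset.mul_prod_erase univ
    (fun i => Matrix.of (fun i j : Fin N => a (f j - (j : ℕ) + (i : ℕ))) (σ i) i) (Finset.mem_univ j),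
    ← mul_assoc]
  congr 1
  · simp only [Matrix.of_apply, if_true]
    rw [← ha]
    congr 1
    ring
  · refine Finset.prod_congr rfl fun i hi => ?_
    have : (i : ℕ) ≠ j := fun h => (Finset.ne_of_mem_erase hi) (Fin.ext h)
    simp [this]

lemma JT_eq_zero {R : Type*} [CommRing R] (h : ℤ → R) (N : ℕ) (f : ℕ → ℤ) (i j : ℕ)
    (hi : i < N) (hj : j < N) (hij : i ≠ j) (e : f i - i = f j - j) : JT h N f = 0 := by
  refine Matrix.det_zero_of_column_eq (i := ⟨i, hi⟩) (j := ⟨j, hj⟩) (by simpa using hij) ?_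
  intro k
  simp [e]

lemma JT_eq_zero' {R : Type*} [CommRing R] (h : ℤ → R) (hneg : ∀ k < 0, h k = 0)
    (N : ℕ) (f : ℕ → ℤ) (hf : f N = -1) : JT h (N + 1) f = 0 := by
  refine Matrix.det_eq_zero_of_column_eq_zero (Fin.last N) ?_
  intro k
  have := k.2
  simp only [Matrix.of_apply, Fin.val_last, hf]
  exact hneg _ (by omega)

/-- `lam` is `μ` plus a box in row `j`. -/
def Rel (μ : YoungDiagram) (j : ℕ) (lam : YoungDiagram) : Prop :=
  ∀ i, lam.rowLen i = μ.rowLen i + if i = j then 1 else 0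

lemma ext_rowLen {μ ν : YoungDiagram} (h : ∀ i, μ.rowLen i = ν.rowLen i) : μ = ν := by
  ext ⟨i, k⟩
  rw [YoungDiagram.mem_cells, YoungDiagram.mem_cells, YoungDiagram.mem_iff_lt_rowLen,
    YoungDiagram.mem_iff_lt_rowLen, h]

lemma Rel.cells {μ lam : YoungDiagram} {j : ℕ} (h : Rel μ j lam) :
    lam.cells = insert (j, μ.rowLen j) μ.cells := by
  ext ⟨i, k⟩
  rw [Finset.mem_insert, YoungDiagram.mem_cells, YoungDiagram.mem_cells,
    YoungDiagram.mem_iff_lt_rowLen, YoungDiagram.mem_iff_lt_rowLen, h, Prod.mk.injEq]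
  split_ifs with hij
  · subst hij; simp; omega
  · simp [hij]

lemma box_notMem (μ : YoungDiagram) (j : ℕ) : (j, μ.rowLen j) ∉ μ.cells := by
  rw [YoungDiagram.mem_cells, YoungDiagram.mem_iff_lt_rowLen]; simp

lemma Rel.card {μ lam : YoungDiagram} {j : ℕ} (h : Rel μ j lam) :
    lam.card = μ.card + 1 := by
  rw [YoungDiagram.card, h.cells, Finset.card_insert_of_notMem (box_notMem μ j)]

lemma rel_of_cells {μ lam : YoungDiagram} {j : ℕ}
    (h : lam.cells = insert (j, μ.rowLen j) μ.cells) : Rel μ j lam := by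
  intro i
  have : ∀ k, k < lam.rowLen i ↔ k < μ.rowLen i + if i = j then 1 else 0 := by
    intro k
    rw [← YoungDiagram.mem_iff_lt_rowLen, ← YoungDiagram.mem_cells, h, Finset.mem_insert,
      YoungDiagram.mem_cells, YoungDiagram.mem_iff_lt_rowLen, Prod.mk.injEq]
    split_ifs with hij
    · subst hij; simp; omega
    · simp [hij]
  exact le_antisymm (le_of_forall_lt fun k hk => (this k).1 hk)
    (le_of_forall_lt fun k hk => (this k).2 hk)

lemma exists_up (μ : YoungDiagram) (j : ℕ)
    (h : ∀ j', j = j' + 1 → μ.rowLen j' ≠ μ.rowLen j) : ∃ lam, Rel μ j lam := by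
  refine ⟨⟨insert (j, μ.rowLen j) μ.cells, ?_⟩, rel_of_cells rfl⟩
  rintro ⟨a, b⟩ ⟨c, d⟩ hle hm
  obtain ⟨h1, h2⟩ := Prod.mk_le_mk.1 hle
  rw [Finset.mem_coe, Finset.mem_insert, YoungDiagram.mem_cells,
    YoungDiagram.mem_iff_lt_rowLen, Prod.mk.injEq] at hm ⊢
  rcases hm with ⟨rfl, rfl⟩ | hm
  · rcases eq_or_lt_of_le h1 with rfl | h1
    · omega
    · right
      obtain ⟨j', rfl⟩ : ∃ j', a = j' + 1 := ⟨a - 1, by omega⟩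
      have := h j' rfl
      have h3 := μ.rowLen_anti j' (j' + 1) (by omega)
      have h4 := μ.rowLen_anti c j' (by omega)
      omega
  · have := μ.rowLen_anti c a h1
    right; omega

lemma exists_down (lam : YoungDiagram) (j : ℕ)
    (h : lam.rowLen j ≠ lam.rowLen (j + 1)) : ∃ μ, Rel μ j lam := by
  have h3 := lam.rowLen_anti j (j + 1) (by omega)
  have hl : IsLowerSet ((lam.cells.erase (j, lam.rowLen j - 1) : Finset (ℕ × ℕ)) : Set (ℕ × ℕ)) := by
    rintro ⟨a, b⟩ ⟨c, d⟩ hle hm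
    obtain ⟨h1, h2⟩ := Prod.mk_le_mk.1 hle
    rw [Finset.mem_coe, Finset.mem_erase, YoungDiagram.mem_cells,
      YoungDiagram.mem_iff_lt_rowLen, ne_eq, Prod.mk.injEq] at hm ⊢
    have h4 := lam.rowLen_anti c a h1
    refine ⟨?_, by omega⟩
    rintro ⟨rfl, rfl⟩
    rcases eq_or_lt_of_le h1 with rfl | h1
    · omega
    · have h4 := lam.rowLen_anti (c + 1) a h1
      omega
  refine ⟨⟨_, hl⟩, ?_⟩
  have : YoungDiagram.rowLen ⟨_, hl⟩ j = lam.rowLen j - 1 := by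
    have : ∀ k, k < YoungDiagram.rowLen ⟨_, hl⟩ j ↔ k < lam.rowLen j - 1 := by
      intro k
      rw [← YoungDiagram.mem_iff_lt_rowLen, ← YoungDiagram.mem_cells]
      rw [Finset.mem_erase, YoungDiagram.mem_cells,
        YoungDiagram.mem_iff_lt_rowLen, ne_eq, Prod.mk.injEq]
      omega
    exact le_antisymm (le_of_forall_lt fun k hk => (this k).1 hk)
      (le_of_forall_lt fun k hk => (this k).2 hk)
  apply rel_of_cells
  rw [this, Finset.insert_erase]
  rw [YoungDiagram.mem_cells, YoungDiagram.mem_iff_lt_rowLen]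
  omega

lemma card_eq_sum (μ : YoungDiagram) (N : ℕ) (h : μ.rowLen N = 0) :
    μ.card = ∑ j ∈ range N, μ.rowLen j := by
  rw [YoungDiagram.card, Finset.card_eq_sum_card_fiberwise (f := Prod.fst) (t := range N)]
  · refine Finset.sum_congr rfl fun j _ => ?_
    rw [YoungDiagram.rowLen_eq_card]; rfl
  · rintro ⟨i, k⟩ hm
    rw [Finset.mem_coe, YoungDiagram.mem_cells, YoungDiagram.mem_iff_lt_rowLen] at hm
    by_contra hc
    simp at hc
    have := μ.rowLen_anti N i hc
    omega

lemma rowLen_nrows (μ : YoungDiagram) (N : ℕ) (h : nrows μ ≤ N) : μ.rowLen N = 0 := by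
  by_contra hc
  have : (N, 0) ∈ μ := YoungDiagram.mem_iff_lt_rowLen.2 (by omega)
  rw [YoungDiagram.mem_iff_lt_colLen] at this
  unfold nrows at h
  omega

lemma rowLen_pos (μ : YoungDiagram) (i : ℕ) (h : i < nrows μ) : 0 < μ.rowLen i := by
  rw [← YoungDiagram.mem_iff_lt_rowLen, YoungDiagram.mem_iff_lt_colLen]
  exact h

lemma nrows_le_card (μ : YoungDiagram) : nrows μ ≤ μ.card := by
  unfold nrows
  rw [YoungDiagram.colLen_eq_card]
  exact Finset.card_le_card (Finset.filter_subset _ _)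

lemma rowLen_le_card (μ : YoungDiagram) (i : ℕ) : μ.rowLen i ≤ μ.card := by
  rw [YoungDiagram.rowLen_eq_card]
  exact Finset.card_le_card (Finset.filter_subset _ _)

lemma finite_card (n : ℕ) : {μ : YoungDiagram | μ.card = n}.Finite := by
  have : Set.InjOn YoungDiagram.cells {μ : YoungDiagram | μ.card = n} := by
    intro μ _ ν _ h
    exact YoungDiagram.ext h
  refine Set.Finite.of_finite_image (Set.Finite.subset
    (Finset.finite_toSet ((range n ×ˢ range n).powerset)) ?_) this
  rintro _ ⟨μ, hμ, rfl⟩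
  rw [Finset.mem_coe, Finset.mem_powerset]
  rintro ⟨i, k⟩ hm
  have hμ : μ.card = n := hμ
  rw [YoungDiagram.mem_cells] at hm
  have h1 := YoungDiagram.mem_iff_lt_rowLen.1 hm
  have h2 : i < nrows μ := by
    by_contra hc
    have := rowLen_nrows μ i (by omega)
    omega
  have := nrows_le_card μ
  have := rowLen_le_card μ i
  simp
  omega

noncomputable def P (n : ℕ) : Finset YoungDiagram := (finite_card n).toFinset

lemma mem_P {n : ℕ} {μ : YoungDiagram} : μ ∈ P n ↔ μ.card = n := by simp [P]

noncomputable def JD {R : Type*} [CommRing R] (h : ℤ → R) (μ : YoungDiagram) : R :=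
  JT h (nrows μ) (fun i => (μ.rowLen i : ℤ))

lemma JD_eq {R : Type*} [CommRing R] (h : ℤ → R) (h0 : h 0 = 1) (hneg : ∀ k < 0, h k = 0)
    (μ : YoungDiagram) (N : ℕ) (hN : nrows μ ≤ N) :
    JT h N (fun i => (μ.rowLen i : ℤ)) = JD h μ := by
  induction N, hN using Nat.le_induction with
  | base => rfl
  | succ N hN ih => rw [JT_stab h h0 hneg, ih]; simp [rowLen_nrows μ N hN]

open Classical in
lemma JD_up {R : Type*} [CommRing R] (h : ℤ → R) (h0 : h 0 = 1) (hneg : ∀ k < 0, h k = 0)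
    (n : ℕ) (μ : YoungDiagram) (hμ : μ.card = n) :
    ∑ lam ∈ P (n + 1), ∑ j : Fin (n + 1), (if Rel μ j lam then JD h lam else 0)
      = h 1 * JD h μ := by
  have hn := nrows_le_card μ
  rw [← JD_eq h h0 hneg μ n (by omega), ← JT_up h hneg n _ (by simp [rowLen_nrows μ n (by omega)]),
    Finset.sum_comm]
  refine Finset.sum_congr rfl fun j _ => ?_
  by_cases hex : ∃ lam, Rel μ j lam
  · obtain ⟨lam, hl⟩ := hex
    rw [Finset.sum_eq_single lam]
    · have hc := hl.card
      rw [if_pos hl, ← JD_eq h h0 hneg lam (n + 1) (by have := nrows_le_card lam; omega)]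
      congr 1
      ext i
      rw [hl i]
      push_cast
      rfl
    · intro ν _ hne
      rw [if_neg]
      intro hr
      exact hne (ext_rowLen fun i => by rw [hr i, hl i])
    · intro hm
      exact absurd (mem_P.2 (by rw [hl.card, hμ])) hm
  · rw [Finset.sum_eq_zero]
    · have : ∃ j', (j : ℕ) = j' + 1 ∧ μ.rowLen j' = μ.rowLen j := by
        by_contra hc
        push Not at hc
        exact hex (exists_up μ j hc)
      obtain ⟨j', hj, he⟩ := this
      symm
      have := j.2
      refine JT_eq_zero h _ _ j' j (by omega) j.2 (by omega) ?_
      rw [← he, hj]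
      simp
    · intro lam _
      rw [if_neg]
      exact fun hc => hex ⟨lam, hc⟩

open Classical in
lemma JD_down {R : Type*} [CommRing R] (a : ℤ → R) (h0 : a 0 = 1) (hneg : ∀ k < 0, a k = 0)
    (ha : ∀ k : ℤ, a (k - 1) = k * a k)
    (n : ℕ) (lam : YoungDiagram) (hlam : lam.card = n + 1) :
    ∑ μ ∈ P n, ∑ j : Fin (n + 1), (if Rel μ j lam then JD a μ else 0)
      = (n + 1 : ℕ) * JD a lam := by
  have hn := nrows_le_card lam
  have hz := rowLen_nrows lam (n + 1) (by omega)
  rw [← JD_eq a h0 hneg lam (n + 1) (by omega)]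
  have hd := JT_down a ha (n + 1) (fun i => (lam.rowLen i : ℤ))
  rw [← Nat.cast_sum, Int.cast_natCast, ← card_eq_sum lam (n + 1) hz, hlam] at hd
  rw [← hd, Finset.sum_comm]
  refine Finset.sum_congr rfl fun j _ => ?_
  have hj2 := j.2
  by_cases hex : ∃ μ, Rel μ j lam
  · obtain ⟨μ, hl⟩ := hex
    have hc := hl.card
    rw [Finset.sum_eq_single μ]
    · rw [if_pos hl, ← JD_eq a h0 hneg μ (n + 1) (by have := nrows_le_card μ; omega)]
      congr 1
      ext i
      rw [hl i]
      push_cast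
      ring
    · intro ν _ hne
      rw [if_neg]
      intro hr
      refine hne (ext_rowLen fun i => ?_)
      have := hr i
      have := hl i
      omega
    · intro hm
      exact absurd (mem_P.2 (by omega)) hm
  · rw [Finset.sum_eq_zero]
    · have he : lam.rowLen j = lam.rowLen (j + 1) := by
        by_contra hc
        exact hex (exists_down lam j hc)
      symm
      by_cases hj : (j : ℕ) = n
      · apply JT_eq_zero' a hneg
        rw [hj] at he
        simp [hj, he, hz]
      · refine JT_eq_zero a _ _ j (j + 1) (by omega) (by omega) (by omega) ?_
        simp only [if_true]
        rw [← he, if_neg (by omega)]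
        push_cast
        ring
    · intro lam _
      rw [if_neg]
      exact fun hc => hex ⟨lam, hc⟩

/-- standard Young tableaux as functions -/
def S (μ : YoungDiagram) : Set (ℕ × ℕ → ℕ) :=
  {f | (∀ c, c ∉ μ.cells → f c = 0) ∧ Set.BijOn f μ.cells (Set.Iio μ.card) ∧
    ∀ a ∈ μ.cells, ∀ b ∈ μ.cells, a ≤ b → f a ≤ f b}

def toFun (μ : YoungDiagram) (T : μ.cells ≃ Fin μ.card) (c : ℕ × ℕ) : ℕ :=
  if h : c ∈ μ.cells then (T ⟨c, h⟩ : ℕ) else 0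

lemma toFun_mem (μ : YoungDiagram) (T : μ.cells ≃ Fin μ.card)
    (hT : ∀ a b : μ.cells, (a : ℕ × ℕ).1 ≤ (b : ℕ × ℕ).1 → (a : ℕ × ℕ).2 ≤ (b : ℕ × ℕ).2 →
      (T a : ℕ) ≤ (T b : ℕ)) : toFun μ T ∈ S μ := by
  refine ⟨fun c hc => by simp only [toFun, dif_neg hc], ⟨?_, ?_, ?_⟩, ?_⟩
  · intro c hc
    have hc : c ∈ μ.cells := hc
    simp only [toFun, dif_pos hc, Set.mem_Iio]
    exact (T ⟨c, hc⟩).2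
  · intro c hc d hd e
    have hc : c ∈ μ.cells := hc
    have hd : d ∈ μ.cells := hd
    simp only [toFun, dif_pos hc, dif_pos hd] at e
    have := T.injective (Fin.ext e)
    simpa using this
  · intro k hk
    have hk : k < μ.card := hk
    refine ⟨(T.symm ⟨k, hk⟩ : μ.cells), (T.symm ⟨k, hk⟩).2, ?_⟩
    simp [toFun]
  · intro a ha b hb hab
    simp only [toFun, dif_pos ha, dif_pos hb]
    exact hT ⟨a, ha⟩ ⟨b, hb⟩ hab.1 hab.2

lemma SYTCount_eq (μ : YoungDiagram) : SYTCount μ = (S μ).ncard := by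
  unfold SYTCount
  rw [← Nat.card_coe_set_eq]
  refine Nat.card_congr (Equiv.ofBijective
    (fun T => (⟨toFun μ T.1, toFun_mem μ T.1 T.2⟩ : S μ)) ⟨?_, ?_⟩)
  · rintro ⟨T, hT⟩ ⟨U, hU⟩ h
    simp only [Subtype.mk.injEq] at h ⊢
    ext ⟨c, hc⟩
    have := congrFun h c
    simpa only [toFun, dif_pos hc] using this
  · rintro ⟨f, h1, h2, h3⟩
    have hb : Function.Bijective (fun c : μ.cells => (⟨f c, h2.1 c.2⟩ : Fin μ.card)) := by
      constructor
      · intro c d e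
        exact Subtype.ext (h2.2.1 c.2 d.2 (congrArg Fin.val e))
      · intro k
        obtain ⟨c, hc, e⟩ := h2.2.2 (show (k : ℕ) ∈ Set.Iio μ.card from k.2)
        exact ⟨⟨c, hc⟩, Fin.ext e⟩
    refine ⟨⟨Equiv.ofBijective _ hb, fun a b hab hab' => h3 a a.2 b b.2 ⟨hab, hab'⟩⟩, ?_⟩
    apply Subtype.ext
    ext c
    by_cases hc : c ∈ μ.cells
    · simp only [toFun, dif_pos hc, Equiv.ofBijective_apply]
    · simp only [toFun, dif_neg hc, h1 c hc]

lemma S_finite (μ : YoungDiagram) : (S μ).Finite := by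
  have : Finite (S μ) := by
    refine Finite.of_injective
      (fun f : S μ => fun c : μ.cells => (⟨f.1 c, f.2.2.1.1 c.2⟩ : Fin μ.card)) ?_
    rintro ⟨f, hf⟩ ⟨g, hg⟩ h
    rw [Subtype.mk.injEq]
    ext c
    by_cases hc : c ∈ μ.cells
    · exact congrArg Fin.val (congrFun h ⟨c, hc⟩)
    · rw [hf.1 c hc, hg.1 c hc]
  exact Set.toFinite _

noncomputable def SF (μ : YoungDiagram) : Finset (ℕ × ℕ → ℕ) := (S_finite μ).toFinset

lemma mem_SF {μ : YoungDiagram} {f} : f ∈ SF μ ↔ f ∈ S μ := by simp [SF]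

lemma SYTCount_eq' (μ : YoungDiagram) : SYTCount μ = (SF μ).card := by
  rw [SYTCount_eq, Set.ncard_eq_toFinset_card _ (S_finite μ)]; rfl

lemma update_mem {μ lam : YoungDiagram} {j n : ℕ} (hr : Rel μ j lam) (hn : μ.card = n)
    {f : ℕ × ℕ → ℕ} (hf : f ∈ S μ) : Function.update f (j, μ.rowLen j) n ∈ S lam := by
  obtain ⟨h1, h2, h3⟩ := hf
  have hc := hr.card
  have hcells := hr.cells
  have hnm := box_notMem μ j
  generalize hcc : (j, μ.rowLen j) = c at *
  have hlt : ∀ x ∈ μ.cells, f x < n := fun x hx => hn ▸ h2.1 hx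
  have hne : ∀ x ∈ μ.cells, x ≠ c := fun x hx e => hnm (e ▸ hx)
  refine ⟨?_, ⟨?_, ?_, ?_⟩, ?_⟩
  · intro x hx
    rw [hcells, Finset.mem_insert, not_or] at hx
    rw [Function.update_of_ne hx.1, h1 x hx.2]
  · intro x hx
    rw [Finset.mem_coe, hcells, Finset.mem_insert] at hx
    rw [Set.mem_Iio]
    rcases hx with rfl | hx
    · rw [Function.update_self]; omega
    · rw [Function.update_of_ne (hne x hx)]; have := hlt x hx; omega
  · intro x hx y hy e
    rw [Finset.mem_coe, hcells, Finset.mem_insert] at hx hy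
    rcases hx with rfl | hx <;> rcases hy with rfl | hy
    · rfl
    · rw [Function.update_self, Function.update_of_ne (hne y hy)] at e
      have := hlt y hy; omega
    · rw [Function.update_self, Function.update_of_ne (hne x hx)] at e
      have := hlt x hx; omega
    · rw [Function.update_of_ne (hne x hx), Function.update_of_ne (hne y hy)] at e
      exact h2.2.1 hx hy e
  · intro k hk
    rw [Set.mem_Iio, hc, hn] at hk
    rcases Nat.lt_succ_iff_lt_or_eq.1 hk with hk | rfl
    · obtain ⟨x, hx, e⟩ := h2.2.2 (show k ∈ Set.Iio μ.card by rw [hn]; exact hk)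
      refine ⟨x, ?_, by rw [Function.update_of_ne (hne x hx), e]⟩
      rw [Finset.mem_coe, hcells]
      exact Finset.mem_insert_of_mem hx
    · refine ⟨c, ?_, Function.update_self ..⟩
      rw [Finset.mem_coe, hcells]
      exact Finset.mem_insert_self _ _
  · intro a ha b hb hab
    rw [hcells, Finset.mem_insert] at ha hb
    rcases hb with rfl | hb
    · rw [Function.update_self]
      rcases ha with rfl | ha
      · rw [Function.update_self]
      · rw [Function.update_of_ne (hne a ha)]; exact (hlt a ha).le
    · rcases ha with rfl | ha
      · exact absurd (μ.isLowerSet hab hb) hnm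
      · rw [Function.update_of_ne (hne a ha), Function.update_of_ne (hne b hb)]
        exact h3 a ha b hb hab

lemma exists_update {lam : YoungDiagram} {n : ℕ} (hn : lam.card = n + 1)
    {g : ℕ × ℕ → ℕ} (hg : g ∈ S lam) :
    ∃ (μ : YoungDiagram) (j : ℕ), Rel μ j lam ∧ ∃ f ∈ S μ,
      Function.update f (j, μ.rowLen j) n = g := by
  obtain ⟨h1, h2, h3⟩ := hg
  obtain ⟨⟨j, k⟩, hc, e⟩ := h2.2.2 (show n ∈ Set.Iio lam.card by rw [hn]; simp)
  have hc : (j, k) ∈ lam.cells := hc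
  have key : ∀ x ∈ lam.cells, (j, k) ≤ x → x = (j, k) := by
    intro x hx hle
    have a1 := h3 _ hc x hx hle
    have a2 : g x < lam.card := h2.1 hx
    exact h2.2.1 hx hc (by omega)
  have k1 : lam.rowLen j ≤ k + 1 := by
    by_contra hcon
    have hm : (j, k + 1) ∈ lam.cells := by
      rw [YoungDiagram.mem_cells, YoungDiagram.mem_iff_lt_rowLen]; omega
    have := key _ hm (Prod.mk_le_mk.2 ⟨le_rfl, by omega⟩)
    simp at this
  have k2 : lam.rowLen (j + 1) ≤ k := by
    by_contra hcon
    have hm : (j + 1, k) ∈ lam.cells := by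
      rw [YoungDiagram.mem_cells, YoungDiagram.mem_iff_lt_rowLen]; omega
    have := key _ hm (Prod.mk_le_mk.2 ⟨by omega, le_rfl⟩)
    simp at this
  have k3 : k < lam.rowLen j := by
    rwa [YoungDiagram.mem_cells, YoungDiagram.mem_iff_lt_rowLen] at hc
  obtain ⟨μ, hr⟩ := exists_down lam j (by omega)
  have k4 : μ.rowLen j = k := by
    have := hr j
    simp at this
    omega
  have hcard := hr.card
  have hcells := hr.cells
  have hnm := box_notMem μ j
  refine ⟨μ, j, hr, Function.update g (j, k) 0, ?_, ?_⟩
  · rw [k4] at hcells hnm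
    generalize (j, k) = c at *
    have hne : ∀ x ∈ μ.cells, x ≠ c := fun x hx e => hnm (e ▸ hx)
    have hin : ∀ x ∈ μ.cells, x ∈ lam.cells := fun x hx => by
      rw [hcells]; exact Finset.mem_insert_of_mem hx
    refine ⟨?_, ⟨?_, ?_, ?_⟩, ?_⟩
    · intro x hx
      by_cases hxc : x = c
      · rw [hxc, Function.update_self]
      · rw [Function.update_of_ne hxc]
        apply h1
        rw [hcells, Finset.mem_insert]
        tauto
    · intro x hx
      rw [Function.update_of_ne (hne x hx)]
      have a2 : g x < lam.card := h2.1 (hin x hx)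
      have a3 : g x ≠ n := fun e' => hne x hx (h2.2.1 (hin x hx) hc (by omega))
      rw [Set.mem_Iio]
      omega
    · intro x hx y hy e'
      rw [Function.update_of_ne (hne x hx), Function.update_of_ne (hne y hy)] at e'
      exact h2.2.1 (hin x hx) (hin y hy) e'
    · intro m hm
      rw [Set.mem_Iio] at hm
      obtain ⟨x, hx, e'⟩ := h2.2.2 (show m ∈ Set.Iio lam.card by rw [Set.mem_Iio]; omega)
      have hxc : x ≠ c := by rintro rfl; omega
      refine ⟨x, ?_, by rw [Function.update_of_ne hxc, e']⟩
      rw [Finset.mem_coe, hcells, Finset.mem_insert] at hx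
      exact hx.resolve_left hxc
    · intro a ha b hb hab
      rw [Function.update_of_ne (hne a ha), Function.update_of_ne (hne b hb)]
      exact h3 a (hin a ha) b (hin b hb) hab
  · rw [k4, Function.update_idem, ← e, Function.update_eq_self]

open Classical in
lemma SYT_branch (n : ℕ) (lam : YoungDiagram) (hlam : lam.card = n + 1) :
    SYTCount lam = ∑ μ ∈ P n, ∑ j : Fin (n + 1), (if Rel μ j lam then SYTCount μ else 0) := by
  have hS : SF lam = ((P n ×ˢ (Finset.univ : Finset (Fin (n + 1)))).filter
      (fun p => Rel p.1 p.2 lam)).biUnion fun p => (SF p.1).image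
        (fun f => Function.update f ((p.2 : ℕ), p.1.rowLen p.2) n) := by
    ext g
    simp only [Finset.mem_biUnion, Finset.mem_filter, Finset.mem_product, mem_P, Finset.mem_univ,
      and_true, Finset.mem_image, mem_SF, Prod.exists]
    constructor
    · intro hg
      obtain ⟨μ, j, hr, f, hf, e⟩ := exists_update hlam hg
      have hc := hr.card
      have hj : j < n + 1 := by
        by_contra hcon
        have a1 := rowLen_nrows lam j (by have := nrows_le_card lam; omega)
        have := hr j
        simp at this
        omega
      exact ⟨μ, ⟨j, hj⟩, ⟨by omega, hr⟩, f, hf, e⟩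
    · rintro ⟨μ, j, ⟨hc, hr⟩, f, hf, rfl⟩
      exact update_mem hr hc hf
  rw [SYTCount_eq', hS, Finset.card_biUnion, Finset.sum_filter, Finset.sum_product]
  · refine Finset.sum_congr rfl fun μ _ => Finset.sum_congr rfl fun j _ => ?_
    split_ifs with hr
    · rw [SYTCount_eq', Finset.card_image_of_injOn]
      intro f hf g hg e
      have hf : f ∈ S μ := mem_SF.1 hf
      have hg : g ∈ S μ := mem_SF.1 hg
      ext c
      by_cases hc : c = ((j : ℕ), μ.rowLen j)
      · rw [hc, hf.1 _ (box_notMem μ j), hg.1 _ (box_notMem μ j)]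
      · have := congrFun e c
        simpa [Function.update_of_ne hc] using this
    · rfl
  · rintro ⟨μ, j⟩ hp ⟨ν, i⟩ hq hne
    simp only [Finset.mem_coe, Finset.mem_filter, Finset.mem_product, mem_P, Finset.mem_univ,
      and_true] at hp hq
    rw [Function.onFun, Finset.disjoint_left]
    intro g hg hg'
    simp only [Finset.mem_image, mem_SF] at hg hg'
    obtain ⟨f, hf, rfl⟩ := hg
    obtain ⟨f', hf', e⟩ := hg'
    have m1 := update_mem hp.2 hp.1 hf
    have m2 := update_mem hq.2 hq.1 hf'
    apply hne
    have hcc : ((j : ℕ), μ.rowLen j) = ((i : ℕ), ν.rowLen i) := by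
      refine m1.2.1.2.1 ?_ ?_ ?_
      · rw [Finset.mem_coe, hp.2.cells]; exact Finset.mem_insert_self _ _
      · rw [Finset.mem_coe, hq.2.cells]; exact Finset.mem_insert_self _ _
      · rw [Function.update_self, ← e, Function.update_self]
    rw [Prod.mk.injEq] at hcc
    have hji : j = i := Fin.ext hcc.1
    subst hji
    have : μ = ν := ext_rowLen fun k => by
      have := hp.2 k
      have := hq.2 k
      omega
    rw [this]

lemma P_zero : P 0 = {⊥} := by
  ext μ
  rw [mem_P, Finset.mem_singleton]
  constructor
  · intro h
    ext c
    rw [YoungDiagram.card, Finset.card_eq_zero] at h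
    simp [h]
  · rintro rfl; rfl

lemma SYT_bot : SYTCount ⊥ = 1 := by
  rw [SYTCount_eq, Set.ncard_eq_one]
  refine ⟨fun _ => 0, ?_⟩
  ext f
  rw [Set.mem_singleton_iff]
  constructor
  · intro hf
    ext c
    exact hf.1 c (by simp)
  · rintro rfl
    refine ⟨by simp, ?_, by simp⟩
    simp [YoungDiagram.card, Set.BijOn, Set.MapsTo, Set.SurjOn]

lemma nrows_bot : nrows ⊥ = 0 := by
  have := nrows_le_card ⊥
  simpa [YoungDiagram.card] using this

lemma JD_bot {R : Type*} [CommRing R] (h : ℤ → R) : JD h ⊥ = 1 := by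
  have : ∀ N, N = 0 → ∀ f, JT h N f = 1 := by
    rintro _ rfl f
    simp [JT]
  exact this _ nrows_bot _

noncomputable def aR (k : ℤ) : ℝ := if 0 ≤ k then ((k.toNat).factorial : ℝ)⁻¹ else 0

lemma aR_neg : ∀ k < 0, aR k = 0 := by
  intro k hk; simp [aR, not_le.2 hk]

lemma aR_zero : aR 0 = 1 := by simp [aR]

lemma aR_sub (k : ℤ) : aR (k - 1) = k * aR k := by
  rcases lt_trichotomy k 0 with hk | rfl | hk
  · rw [aR_neg _ hk, aR_neg _ (by omega), mul_zero]
  · rw [aR_neg _ (by omega)]; simp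
  · obtain ⟨m, rfl⟩ : ∃ m : ℕ, k = m + 1 := ⟨(k - 1).toNat, by omega⟩
    have h1 : ((m : ℤ) + 1).toNat = m + 1 := by omega
    have h2 : ((m : ℤ) + 1 - 1).toNat = m := by omega
    rw [aR, aR, if_pos (by omega), if_pos (by omega), h1, h2, Nat.factorial_succ]
    have : (m.factorial : ℝ) ≠ 0 := by positivity
    push_cast
    field_simp

lemma SYT_eq_JD (n : ℕ) : ∀ μ : YoungDiagram, μ.card = n →
    (SYTCount μ : ℝ) = n.factorial * JD aR μ := by
  classical
  induction n with
  | zero =>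
    intro μ hμ
    have : μ = ⊥ := by rw [← mem_P, P_zero, Finset.mem_singleton] at hμ; exact hμ
    rw [this, SYT_bot, JD_bot]; simp
  | succ n ih =>
    intro lam hlam
    rw [Nat.factorial_succ, mul_comm (n + 1), Nat.cast_mul, mul_assoc,
      ← JD_down aR aR_zero aR_neg aR_sub n lam hlam, SYT_branch n lam hlam]
    push_cast
    rw [Finset.mul_sum]
    refine Finset.sum_congr rfl fun μ hμ => ?_
    rw [Finset.mul_sum]
    refine Finset.sum_congr rfl fun j hj => ?_
    split_ifs
    · exact ih μ (mem_P.1 hμ)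
    · simp

noncomputable def hL (α : ℝ) (k : ℤ) : ℝ[X] := if 0 ≤ k then C (aR k) * lm α k.toNat else 0

lemma hL_neg (α : ℝ) : ∀ k < 0, hL α k = 0 := by
  intro k hk; simp [hL, not_le.2 hk]

lemma hL_zero (α : ℝ) : hL α 0 = 1 := by simp [hL, aR_zero, lm]

lemma hL_one (α : ℝ) : hL α 1 = X + C α := by simp [hL, aR, lm]

lemma main_sum (h : ℤ → ℝ[X]) (h0 : h 0 = 1) (hneg : ∀ k < 0, h k = 0) (n : ℕ) :
    ∑ μ ∈ P n, C (SYTCount μ : ℝ) * JD h μ = h 1 ^ n := by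
  classical
  induction n with
  | zero => rw [P_zero, Finset.sum_singleton, SYT_bot, JD_bot]; simp
  | succ n ih =>
    rw [pow_succ, ← ih, Finset.sum_mul]
    have : ∀ μ ∈ P n, C (SYTCount μ : ℝ) * JD h μ * h 1 =
        ∑ lam ∈ P (n + 1), ∑ j : Fin (n + 1),
          (if Rel μ j lam then C (SYTCount μ : ℝ) * JD h lam else 0) := by
      intro μ hμ
      rw [mul_assoc, mul_comm (JD h μ), ← JD_up h h0 hneg n μ (mem_P.1 hμ), Finset.mul_sum]
      refine Finset.sum_congr rfl fun lam _ => ?_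
      rw [Finset.mul_sum]
      refine Finset.sum_congr rfl fun j _ => ?_
      split_ifs <;> simp
    rw [Finset.sum_congr rfl this, Finset.sum_comm]
    refine Finset.sum_congr rfl fun lam hl => ?_
    rw [SYT_branch n lam (mem_P.1 hl)]
    push_cast
    rw [map_sum, Finset.sum_mul]
    refine Finset.sum_congr rfl fun μ _ => ?_
    rw [map_sum, Finset.sum_mul]
    refine Finset.sum_congr rfl fun j _ => ?_
    split_ifs <;> simp

lemma lm_deriv (α : ℝ) (n : ℕ) : derivative (lm α (n + 1)) = C ((n : ℝ) + 1) * lm α n := by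
  induction n using Nat.strong_induction_on with
  | _ n ih =>
    match n with
    | 0 => simp [lm]
    | 1 => 
      simp [lm]
      ring_nf
      simp [← map_ofNat C]
      try ring
    | (n + 2) =>
      have i1 := ih (n + 1) (by omega)
      have i2 := ih n (by omega)
      have e1 : lm α (n + 2 + 1) = (X + C (α - (((n + 1 : ℕ) : ℝ) + 2) + 1)) * lm α (n + 2)
        + X * C (((n + 1 : ℕ) : ℝ) + 1) * lm α (n + 1) := by rw [lm]
      have e2 : lm α (n + 2) = (X + C (α - ((n : ℝ) + 2) + 1)) * lm α (n + 1)
        + X * C ((n : ℝ) + 1) * lm α n := by rw [lm]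
      rw [e1]
      simp only [derivative_add, derivative_mul, derivative_X, derivative_C, i1, i2]
      rw [e2]
      simp only [map_add, map_sub, Nat.cast_add, Nat.cast_one, Nat.cast_ofNat, map_one,
        show (C (2 : ℝ) : ℝ[X]) = 2 from rfl]
      ring

lemma hL_deriv (α : ℝ) (k : ℤ) : derivative (hL α k) = hL α (k - 1) := by
  rcases lt_trichotomy k 0 with hk | rfl | hk
  · rw [hL_neg α _ hk, hL_neg α _ (by omega)]; simp
  · rw [hL_neg α (0 - 1) (by omega), hL_zero]; simp
  · obtain ⟨m, rfl⟩ : ∃ m : ℕ, k = m + 1 := ⟨(k - 1).toNat, by omega⟩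
    have h1 : ((m : ℤ) + 1).toNat = m + 1 := by omega
    have h2 : ((m : ℤ) + 1 - 1).toNat = m := by omega
    rw [hL, hL, if_pos (by omega), if_pos (by omega), h1, h2, derivative_C_mul, lm_deriv, aR_sub,
      ← mul_assoc, ← C_mul]
    congr 2
    push_cast
    ring

lemma lm_iter (α : ℝ) (n i : ℕ) :
    derivative^[i] (lm α n) = C (n.factorial : ℝ) * hL α (n - i) := by
  induction i with
  | zero =>
    have : (n.factorial : ℝ) ≠ 0 := by positivity
    rw [Function.iterate_zero_apply, hL, aR, if_pos (by simp), if_pos (by simp),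
      show ((n : ℤ) - ((0 : ℕ) : ℤ)).toNat = n by omega]
    rw [← mul_assoc, ← C_mul, mul_inv_cancel₀ this, C_1, one_mul]
  | succ i ih =>
    rw [Function.iterate_succ_apply', ih, derivative_C_mul, hL_deriv]
    congr 2
    push_cast
    ring

lemma descFactorial_aR (n i : ℕ) : (n.descFactorial i : ℝ) = n.factorial * aR (n - i) := by
  have : (n.factorial : ℝ) ≠ 0 := by positivity
  by_cases h : i ≤ n
  · have e : ((n : ℤ) - i).toNat = n - i := by omega
    rw [aR, if_pos (by omega), e, ← Nat.factorial_mul_descFactorial h]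
    have : ((n - i).factorial : ℝ) ≠ 0 := by positivity
    push_cast
    field_simp
  · rw [aR_neg _ (by omega), Nat.descFactorial_of_lt (by omega)]; simp

lemma det_rev {R : Type*} [CommRing R] (h : ℤ → R) (μ : YoungDiagram) :
    Matrix.det (Matrix.of fun i j : Fin (nrows μ) => h ((degVec μ j : ℤ) - (i : ℕ)))
      = ((Equiv.Perm.sign (Fin.revPerm (n := nrows μ)) : ℤ) : R) * JD h μ := by
  unfold JD JT
  rw [← Matrix.det_permute]
  congr 1
  ext i j
  simp only [Matrix.of_apply, Matrix.submatrix_apply, id, Fin.revPerm_apply, Fin.val_rev, degVec]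
  congr 1
  have := i.2
  have := j.2
  omega

lemma degVec_inj (μ : YoungDiagram) : Function.Injective (degVec μ) := by
  have : StrictAnti (degVec μ) := by
    intro i j hij
    have := μ.rowLen_anti i j hij.le
    have := i.2
    have := j.2
    have : (i : ℕ) < j := hij
    unfold degVec
    omega
  exact this.injective

lemma vand_eq (μ : YoungDiagram) :
    (∏ p ∈ Finset.univ.filter (fun p : Fin (nrows μ) × Fin (nrows μ) => p.1 < p.2),
        ((degVec μ p.2 : ℝ) - (degVec μ p.1 : ℝ))) =
    (∏ j, ((degVec μ j).factorial : ℝ)) *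
      (((Equiv.Perm.sign (Fin.revPerm (n := nrows μ)) : ℤ) : ℝ) * JD aR μ) := by
  rw [← det_rev, ← Matrix.det_mul_row]
  have := Matrix.det_eval_matrixOfPolynomials_eq_det_vandermonde
    (fun j : Fin (nrows μ) => (degVec μ j : ℝ)) (fun i => descPochhammer ℝ i)
    (fun i => descPochhammer_natDegree ℝ i) (fun i => monic_descPochhammer ℝ i)
  rw [Matrix.det_vandermonde, ← Matrix.det_transpose] at this
  convert this using 1
  · rw [Finset.prod_filter, ← Finset.univ_product_univ, Finset.prod_product]
    refine Finset.prod_congr rfl fun i _ => ?_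
    rw [← Finset.prod_filter]
    refine Finset.prod_congr ?_ fun _ _ => rfl
    ext; simp
  · congr 1
    ext i j
    simp only [Matrix.of_apply, Matrix.transpose_apply, descPochhammer_eval_eq_descFactorial,
      descFactorial_aR]

lemma vand_ne (μ : YoungDiagram) :
    (∏ p ∈ Finset.univ.filter (fun p : Fin (nrows μ) × Fin (nrows μ) => p.1 < p.2),
        ((degVec μ p.2 : ℝ) - (degVec μ p.1 : ℝ))) ≠ 0 := by
  rw [Finset.prod_ne_zero_iff]
  rintro ⟨i, j⟩ h
  rw [Finset.mem_filter] at h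
  rw [sub_ne_zero]
  intro e
  exact h.2.ne (degVec_inj μ (Nat.cast_injective e)).symm

lemma lW_eq (α : ℝ) (μ : YoungDiagram) : C (JD aR μ) * lW α μ = JD (hL α) μ := by
  have hv := vand_ne μ
  have hw : Wr (fun i => lm α (degVec μ i)) = C (∏ j, ((degVec μ j).factorial : ℝ)) *
      (((Equiv.Perm.sign (Fin.revPerm (n := nrows μ)) : ℤ) : ℝ[X]) * JD (hL α) μ) := by
    unfold Wr
    rw [← det_rev, map_prod, ← Matrix.det_mul_row]
    congr 1
    ext1 i j
    simp only [Matrix.of_apply, lm_iter]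
  unfold lW
  rw [hw, vand_eq]
  rw [vand_eq] at hv
  have e : ((Equiv.Perm.sign (Fin.revPerm (n := nrows μ)) : ℤ) : ℝ[X]) =
    C ((Equiv.Perm.sign (Fin.revPerm (n := nrows μ)) : ℤ) : ℝ) := by simp
  rw [e, ← mul_assoc, ← mul_assoc, ← mul_assoc, ← C_mul, ← C_mul, ← C_mul]
  generalize (∏ j, ((degVec μ j).factorial : ℝ)) = A at *
  generalize (((Equiv.Perm.sign (Fin.revPerm (n := nrows μ)) : ℤ) : ℝ)) = s at *
  have h1 : A ≠ 0 := left_ne_zero_of_mul hv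
  have h2 : s ≠ 0 := left_ne_zero_of_mul (right_ne_zero_of_mul hv)
  have h3 : JD aR μ ≠ 0 := right_ne_zero_of_mul (right_ne_zero_of_mul hv)
  rw [show JD aR μ * (A * (s * JD aR μ))⁻¹ * A * s = 1 by field_simp, C_1, one_mul]

end WL

theorem stmt12 (α : ℝ) (n : ℕ) :
    ∑ᶠ μ ∈ {μ : YoungDiagram | μ.card = n},
        C ((SYTCount μ : ℝ) ^ 2 / (Nat.factorial n : ℝ)) * lW α μ = (X + C α) ^ n := by
  rw [finsum_mem_eq_finite_toFinset_sum _ (WL.finite_card n), ← WL.hL_one,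
    ← WL.main_sum (WL.hL α) (WL.hL_zero α) (WL.hL_neg α) n]
  refine Finset.sum_congr rfl fun μ hμ => ?_
  have h := WL.SYT_eq_JD n μ (WL.mem_P.1 hμ)
  have hf : (n.factorial : ℝ) ≠ 0 := by positivity
  rw [← WL.lW_eq, ← mul_assoc, ← C_mul]
  congr 2
  rw [pow_two, mul_div_assoc]
  congr 1
  rw [h]
  field_simp
end
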